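/- arXiv:1312.3889 — 3 statements merged into one kernel-verified Lean document; each statement's English description precedes it below -/
import Mathlib

section
/- Let K be a finite field of characteristic p and let d be an integer with gcd(d, |K| − 1) = 1 that is nondegenerate over K. Then the set {W_{K,d}(a) : a ∈ K^×} has at least 3 elements. -/
open scoped BigOperators Classical

/-- The canonical additive character of a finite field `K` of characteristic `p`:
`ψ_K(x) = exp(2πi · Tr_{K/F_p}(x) / p)`, where `Tr_{K/F_p}` is the absolute trace. -/
noncomputable def canonicalAddChar (p : ℕ) [Fact p.Prime] (K : Type) [Field K] [Fintype K]
    [Algebra (ZMod p) K] (x : K) : ℂ :=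
  Complex.exp (2 * Real.pi * Complex.I * ((Algebra.trace (ZMod p) K x).val : ℂ) / (p : ℂ))

/-- The Weil sum `W_{K,d}(a) = ∑_{x ∈ K} ψ_K(x^d + a·x)`. -/
noncomputable def weilSum (p : ℕ) [Fact p.Prime] (K : Type) [Field K] [Fintype K]
    [Algebra (ZMod p) K] (d : ℤ) (a : K) : ℂ :=
  ∑ x : K, canonicalAddChar p K (x ^ d + a * x)

/-- The value set `{W_{K,d}(a) : a ∈ K^×}` of the Weil sum. -/
noncomputable def weilValues (p : ℕ) [Fact p.Prime] (K : Type) [Field K] [Fintype K]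
    [Algebra (ZMod p) K] (d : ℤ) : Set ℂ :=
  {w : ℂ | ∃ a : K, a ≠ 0 ∧ weilSum p K d a = w}

/-- `d` is degenerate over a finite field of order `q` and characteristic `p` if
`d ≡ p^j (mod q − 1)` for some nonnegative integer `j`. -/
def IsDegenerate (p : ℕ) (q : ℕ) (d : ℤ) : Prop :=
  ∃ j : ℕ, d ≡ (p : ℤ) ^ j [ZMOD (q : ℤ) - 1]


lemma arith_aux (p n : ℕ) (hp : p.Prime) (A B : ℤ) (q : ℤ) (hq : q = (p:ℤ)^n) (hq3 : 3 ≤ q)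
   (h : q^2 - (A+B)*q + (q-1)*(A*B) = 0) (hA : -q < A) (hA' : A < q) (hB : -q < B) (hB' : B < q) :
   False := by
  have hdv : q ∣ A * B := ⟨q - (A + B) + A*B, by linarith⟩
  obtain ⟨k, hk⟩ := hdv
  have hs : A + B = q + (q-1)*k := by
    have : q * (A + B) = q * (q + (q-1)*k) := by rw [hk] at h; linarith
    exact mul_left_cancel₀ (by omega) this
  have h1 : 0 < (q-A)*(q-B) := mul_pos (by omega) (by omega)
  have h2 : 0 < (q+A)*(q+B) := mul_pos (by omega) (by omega)
  have e1 : (q-A)*(q-B) = -(k * (q*(q-2))) := by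
    linear_combination hk - q * hs
  have e2 : (q+A)*(q+B) = (k+2) * q^2 := by
    linear_combination hk + q * hs
  have k0 : k < 0 := by
    by_contra hc
    have : 0 ≤ k * (q*(q-2)) := mul_nonneg (by omega) (mul_nonneg (by omega) (by omega))
    omega
  have k2 : -2 < k := by
    by_contra hc
    have : (k+2) * q^2 ≤ 0 := mul_nonpos_of_nonpos_of_nonneg (by omega) (by positivity)
    omega
  have : k = -1 := by omega
  subst this
  have hB2 : B = 1 - A := by omega
  subst hB2
  have hAq : A * (A-1) = (p:ℤ)^n := by rw [← hq]; linarith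
  have hcop : IsCoprime A (A-1) := ⟨1, -1, by ring⟩
  -- units
  have hpp : Prime (p:ℤ) := Nat.prime_iff_prime_int.mp hp
  have : IsUnit A ∨ IsUnit (A-1) := by
    by_contra hc
    push Not at hc
    have f : ∀ x : ℤ, x ∣ (p:ℤ)^n → ¬ IsUnit x → (p:ℤ) ∣ x := by
      intro x hx hu
      obtain ⟨i, hi, hxi⟩ := (dvd_prime_pow hpp n).1 hx
      rcases Nat.eq_zero_or_pos i with rfl | hi0
      · exact absurd (hxi.symm.isUnit (by simp)) hu
      · exact (dvd_pow_self _ hi0.ne').trans hxi.symm.dvd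
    have a1 := f A (hAq ▸ dvd_mul_right _ _) hc.1
    have a2 := f (A-1) (hAq ▸ dvd_mul_left _ _) hc.2
    exact hpp.not_isUnit (hcop.isUnit_of_dvd' a1 a2)
  have hq' : 3 ≤ A*(A-1) := by rw [hAq, ← hq]; exact hq3
  rcases this with h | h <;> rcases Int.isUnit_iff.1 h with h | h
  · rw [h] at hq'; norm_num at hq'
  · rw [h] at hq'; norm_num at hq'
  · have : A = 2 := by omega
    rw [this] at hq'; norm_num at hq'
  · have : A = 0 := by omega
    rw [this] at hq'; norm_num at hq'

section
variable {K : Type} [Field K] [Fintype K]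

lemma pow_inj_aux {D : ℕ} (hD : D.Coprime (Fintype.card K - 1)) (hD0 : D ≠ 0) :
    Function.Injective (fun x : K => x ^ D) := by
  intro x y h
  simp only at h
  by_cases hx : x = 0
  · subst hx
    rw [zero_pow hD0] at h
    exact (pow_eq_zero_iff hD0 |>.1 h.symm).symm
  have hy : y ≠ 0 := by
    rintro rfl
    rw [zero_pow hD0] at h
    exact hx (pow_eq_zero_iff hD0 |>.1 h)
  have : (x/y)^D = 1 := by rw [div_pow, h, div_self (pow_ne_zero _ hy)]
  have h2 : (x/y)^(Fintype.card K - 1) = 1 := FiniteField.pow_card_sub_one_eq_one _ (div_ne_zero hx hy)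
  have h3 : orderOf (x/y) ∣ 1 := by
    rw [← hD]
    exact Nat.dvd_gcd (orderOf_dvd_of_pow_eq_one this) (orderOf_dvd_of_pow_eq_one h2)
  rw [Nat.dvd_one, orderOf_eq_one_iff, div_eq_one_iff_eq hy] at h3
  exact h3

lemma neg_pow_aux {K : Type} [Field K] {D : ℕ} (hinj : Function.Injective (fun x : K => x ^ D)) (x : K) :
    (-x)^D = -x^D := by
  have : ((-1:K)^D) = -1 := by
    rcases neg_one_pow_eq_or K D with h | h
    · have : (-1:K) = 1 := hinj (by simpa using h)
      rw [h, this]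
    · exact h
  rw [neg_pow, this]; ring

variable (ψ : AddChar K ℂ)

noncomputable def wW (D : ℕ) (a : K) : ℂ := ∑ x : K, ψ (x ^ D + a * x)

lemma sum1 (hψ : ψ.IsPrimitive) (D : ℕ) (hD0 : D ≠ 0) : ∑ a : K, wW ψ D a = Fintype.card K := by
  unfold wW
  rw [Finset.sum_comm]
  simp_rw [AddChar.map_add_eq_mul, ← Finset.mul_sum, AddChar.sum_mulShift _ hψ]
  simp [hD0]

lemma sum2 (hψ : ψ.IsPrimitive) (D : ℕ) (hinj : Function.Injective (fun x : K => x ^ D)) :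
    ∑ a : K, wW ψ D a ^ 2 = (Fintype.card K : ℂ)^2 := by
  unfold wW
  have : ∀ a : K, (∑ x : K, ψ (x ^ D + a * x))^2 = ∑ x : K, ∑ y : K, ψ (x^D + y^D) * ψ (a * (x + y)) := by
    intro a
    rw [sq, Finset.sum_mul_sum]
    refine Finset.sum_congr rfl fun x _ => Finset.sum_congr rfl fun y _ => ?_
    rw [← AddChar.map_add_eq_mul, ← AddChar.map_add_eq_mul]; congr 1; ring
  simp_rw [this]
  rw [Finset.sum_comm]
  have : ∀ x : K, ∑ a : K, ∑ y : K, ψ (x^D + y^D) * ψ (a * (x + y)) = Fintype.card K := by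
    intro x
    rw [Finset.sum_comm]
    simp_rw [← Finset.mul_sum, AddChar.sum_mulShift _ hψ]
    rw [Finset.sum_eq_single (-x)]
    · simp [neg_pow_aux hinj]
    · intro y _ hy
      have : x + y ≠ 0 := fun h => hy (by linear_combination h)
      simp [this]
    · simp
  simp_rw [this]
  simp [sq]

lemma w0 (hψ : ψ.IsPrimitive) (D : ℕ) (hinj : Function.Injective (fun x : K => x ^ D)) : wW ψ D 0 = 0 := by
  unfold wW
  simp only [zero_mul, add_zero]
  rw [Function.Bijective.sum_comp (Finite.injective_iff_bijective.1 hinj) (fun y => ψ y)]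
  have := AddChar.sum_mulShift (1:K) hψ
  simpa using this

noncomputable def vV (D : ℕ) (s : ℕ) (a : K) : ℂ := ∑ x : K, ψ (x ^ D + a * x) ^ s

lemma vV_shift (D : ℕ) (hinj : Function.Injective (fun x : K => x ^ D)) (s : ℕ) (hs : (s : K) ≠ 0) :
    ∃ c : K, c ≠ 0 ∧ ∀ a, vV ψ D s a = wW ψ D (a * c) := by
  obtain ⟨c, hc⟩ := (Finite.injective_iff_bijective.1 hinj).2 (s : K)
  simp only at hc
  have hD0 : D ≠ 0 := by
    rintro rfl
    exact zero_ne_one (hinj (a₁ := (0:K)) (a₂ := 1) (by simp))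
  have hc0 : c ≠ 0 := by
    rintro rfl
    rw [zero_pow hD0] at hc
    exact hs hc.symm
  refine ⟨s * c⁻¹, mul_ne_zero hs (inv_ne_zero hc0), fun a => ?_⟩
  unfold vV wW
  refine Fintype.sum_equiv (Equiv.mulLeft₀ c hc0) _ _ fun x => ?_
  rw [← AddChar.map_nsmul_eq_pow]
  congr 1
  simp only [Equiv.mulLeft₀_apply, nsmul_eq_mul, mul_pow, hc]
  field_simp

lemma vV_congr {p : ℕ} (hp : p.Prime) (ζ : ℂ) (hζ : IsPrimitiveRoot ζ p) (t : K → ℕ) (ht : ∀ x, ψ x = ζ ^ t x)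
    (D s : ℕ) (hs : s.Coprime p) (a a' : K) (h : wW ψ D a = wW ψ D a') :
    vV ψ D s a = vV ψ D s a' := by
  let f : K → Polynomial ℤ := fun a => ∑ x : K, Polynomial.X ^ t (x ^ D + a * x)
  have h1 : ∀ a, wW ψ D a = Polynomial.aeval ζ (f a) := by
    intro a; simp [wW, f, ht]
  have h2 : ∀ a, vV ψ D s a = Polynomial.aeval (ζ^s) (f a) := by
    intro a; simp [vV, f, ht, ← pow_mul, mul_comm]
  have h3 : Polynomial.aeval ζ (f a - f a') = 0 := by
    rw [map_sub, ← h1, ← h1, h, sub_self]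
  have h4 : minpoly ℤ ζ ∣ f a - f a' :=
    minpoly.isIntegrallyClosed_dvd (hζ.isIntegral hp.pos) h3
  rw [hζ.minpoly_eq_pow_coprime hs] at h4
  have h5 : Polynomial.aeval (ζ^s) (f a - f a') = 0 :=
    Polynomial.aeval_eq_zero_of_dvd_aeval_eq_zero h4 (minpoly.aeval _ _)
  rw [map_sub, ← h2, ← h2, sub_eq_zero] at h5
  exact h5

lemma vV_sum {p : ℕ} (h : ∀ x, ψ x ^ p = 1) (D : ℕ) (a : K) :
    ∃ m : ℤ, ∑ s ∈ Finset.range p, vV ψ D s a = m := by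
  unfold vV
  rw [Finset.sum_comm]
  refine ⟨∑ x : K, if ψ (x ^ D + a * x) = 1 then (p:ℤ) else 0, ?_⟩
  push_cast
  refine Finset.sum_congr rfl fun x _ => ?_
  split_ifs with h1
  · simp [h1]
  · rw [geom_sum_eq h1, h]; simp

lemma rat_int (z : ℂ) (hz : IsIntegral ℤ z) (N m : ℤ) (hN : N ≠ 0) (h : N * z = m) : ∃ k : ℤ, z = k := by
  have e : z = algebraMap ℚ ℂ (m / N) := by
    have : (N : ℂ) ≠ 0 := by exact_mod_cast hN
    simp only [map_div₀, map_intCast]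
    field_simp
    rw [← h]; ring
  rw [e, isIntegral_algebraMap_iff (algebraMap ℚ ℂ).injective] at hz
  obtain ⟨k, hk⟩ := IsIntegrallyClosed.isIntegral_iff.1 hz
  refine ⟨k, ?_⟩
  rw [e, ← hk]; simp

lemma wW_isIntegral {p : ℕ} (hp : p.Prime) (h : ∀ x, ψ x ^ p = 1) (D : ℕ) (a : K) : IsIntegral ℤ (wW ψ D a) := by
  refine IsIntegral.sum _ fun x _ => ?_
  exact IsIntegral.of_pow hp.pos (by rw [h]; exact isIntegral_one)

lemma wW_bound {p : ℕ} (hp : p.Prime) (h : ∀ x, ψ x ^ p = 1) (D : ℕ) (hD0 : D ≠ 0) (a : K) (A : ℤ)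
    (hA : wW ψ D a = A) :
    - (Fintype.card K : ℤ) < A ∧ (A < Fintype.card K ∨ ∀ x, ψ (x ^ D + a * x) = 1) := by
  have hn : ∀ x, ‖ψ x‖ = 1 := fun x => Complex.norm_eq_one_of_pow_eq_one (h x) hp.ne_zero
  have hr : (A:ℝ) = ∑ x : K, (ψ (x ^ D + a * x)).re := by
    have := congrArg Complex.re hA
    simp only [wW, Complex.re_sum, Complex.intCast_re] at this
    exact this.symm
  have hle : ∀ x, (ψ x).re ≤ 1 := fun x => (Complex.re_le_norm _).trans (hn x).le
  have hge : ∀ x, -1 ≤ (ψ x).re := fun x => by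
    have := Complex.abs_re_le_norm (ψ x)
    rw [hn] at this
    exact (abs_le.1 this).1
  constructor
  · have : (-(Fintype.card K : ℝ)) < A := by
      rw [hr]
      calc -(Fintype.card K : ℝ) = ∑ x : K, (-1 : ℝ) := by simp
        _ < _ := Finset.sum_lt_sum (fun x _ => hge _) ⟨0, Finset.mem_univ _, by simp [hD0]⟩
    exact_mod_cast this
  · by_cases hc : ∀ x, ψ (x ^ D + a * x) = 1
    · exact Or.inr hc
    left
    push Not at hc
    obtain ⟨y, hy⟩ := hc
    have : (A:ℝ) < Fintype.card K := by
      rw [hr]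
      calc _ < ∑ x : K, (1 : ℝ) := Finset.sum_lt_sum (fun x _ => hle _) ⟨y, Finset.mem_univ _, ?_⟩
        _ = _ := by simp
      refine lt_of_le_of_ne (hle _) fun h1 => hy ?_
      apply Complex.ext
      · simpa using h1
      · have h2 := Complex.sq_norm (ψ (y ^ D + a * y))
        rw [hn, Complex.normSq_apply, h1] at h2
        simp; nlinarith
    exact_mod_cast this

lemma main_aux (hψ : ψ.IsPrimitive) {p : ℕ} (hp : p.Prime) [CharP K p] (ζ : ℂ) (hζ : IsPrimitiveRoot ζ p) (t : K → ℕ)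
    (ht : ∀ x, ψ x = ζ ^ t x) (D : ℕ) (hinj : Function.Injective (fun x : K => x ^ D)) (hD0 : D ≠ 0)
    (hq : 4 ≤ Fintype.card K)
    (hnd : ∀ a, a ≠ 0 → ¬ ∀ x, ψ (x ^ D + a * x) = 1) (a b : K) (ha : a ≠ 0) (hb : b ≠ 0)
    (hab : ∀ c, c ≠ 0 → wW ψ D c = wW ψ D a ∨ wW ψ D c = wW ψ D b) : False := by
  have hpow : ∀ x, ψ x ^ p = 1 := fun x => by rw [ht, ← pow_mul, mul_comm, pow_mul, hζ.pow_eq_one, one_pow]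
  have S1 : ∑ c ∈ Finset.univ.erase (0:K), wW ψ D c = Fintype.card K := by
    rw [Finset.sum_erase _ (w0 ψ hψ D hinj), sum1 ψ hψ D hD0]
  have S2 : ∑ c ∈ Finset.univ.erase (0:K), wW ψ D c ^ 2 = (Fintype.card K : ℂ)^2 := by
    rw [Finset.sum_erase _ (by simp [w0 ψ hψ D hinj]), sum2 ψ hψ D hinj]
  have hcard : (((Finset.univ.erase (0:K)).card : ℕ) : ℂ) = Fintype.card K - 1 := by
    rw [Finset.card_erase_of_mem (Finset.mem_univ _), Finset.card_univ, Nat.cast_sub (by omega)]; simp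
  have hsK : ∀ s ∈ Finset.range p, s ≠ 0 → (s : K) ≠ 0 ∧ s.Coprime p := by
    intro s hs hs0
    have : ¬ p ∣ s := fun h => by
      have := Nat.le_of_dvd (Nat.pos_of_ne_zero hs0) h
      simp at hs; omega
    exact ⟨by rwa [Ne, CharP.cast_eq_zero_iff K p], ((Nat.Prime.coprime_iff_not_dvd hp).2 this).symm⟩
  by_cases hfix : ∀ s ∈ Finset.range p, s ≠ 0 → ∀ c, c ≠ 0 → vV ψ D s c = wW ψ D c
  · -- rational
    have hint : ∀ c, c ≠ 0 → ∃ k : ℤ, wW ψ D c = k := by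
      intro c hc
      obtain ⟨m, hm⟩ := vV_sum ψ hpow D c
      obtain ⟨r, rfl⟩ : ∃ r, p = r + 1 := ⟨p - 1, by have := hp.pos; omega⟩
      rw [Finset.sum_range_succ'] at hm
      have e : ∑ k ∈ Finset.range r, vV ψ D (k+1) c = r * wW ψ D c := by
        rw [Finset.sum_congr rfl fun k hk => hfix (k+1) (by simp at hk ⊢; exact hk) (by omega) c hc]
        simp
      rw [e] at hm
      refine rat_int _ (wW_isIntegral ψ hp hpow D c) r (m - Fintype.card K) ?_ ?_
      · have := hp.two_le
        intro h; norm_cast at h; omega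
      · push_cast
        rw [← hm]; simp [vV]
    obtain ⟨A, hA⟩ := hint a ha
    obtain ⟨B, hB⟩ := hint b hb
    have bA := wW_bound ψ hp hpow D hD0 a A hA
    have bB := wW_bound ψ hp hpow D hD0 b B hB
    have bA' := bA.2.resolve_right (hnd a ha)
    have bB' := bB.2.resolve_right (hnd b hb)
    obtain ⟨n, -, hn⟩ := FiniteField.card K p
    refine arith_aux p n hp A B (Fintype.card K) (by rw [hn]; simp) (by omega) ?_ bA.1 bA' bB.1 bB'
    have z : ∑ c ∈ Finset.univ.erase (0:K), (wW ψ D c - A) * (wW ψ D c - B) = 0 := by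
      refine Finset.sum_eq_zero fun c hc => ?_
      rcases hab c (Finset.ne_of_mem_erase hc) with h | h
      · rw [h, hA]; ring
      · rw [h, hB]; ring
    have z2 : ∀ c, (wW ψ D c - A) * (wW ψ D c - B) = wW ψ D c ^ 2 - (A+B) * wW ψ D c + A * B := by
      intro c; ring
    simp_rw [z2] at z
    rw [Finset.sum_add_distrib, Finset.sum_sub_distrib, ← Finset.mul_sum, S1, S2, Finset.sum_const, nsmul_eq_mul, hcard] at z
    exact_mod_cast z
  · push Not at hfix
    obtain ⟨s, hs, hs0, c, hc, hsc⟩ := hfix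
    obtain ⟨hsK0, hsp⟩ := hsK s hs hs0
    obtain ⟨e, he0, he⟩ := vV_shift ψ D hinj s hsK0
    have hcong := vV_congr ψ hp ζ hζ t ht D s hsp
    simp_rw [he] at hcong hsc
    -- choose the two values
    have two : ∀ x, x ≠ 0 → wW ψ D x = wW ψ D c ∨ wW ψ D x = wW ψ D (c * e) := by
      intro x hx
      rcases hab x hx with h | h <;> rcases hab c hc with h1 | h1 <;>
        rcases hab (c*e) (mul_ne_zero hc he0) with h2 | h2 <;> simp_all
    have hne : ∀ x, x ≠ 0 → wW ψ D (x * e) ≠ wW ψ D x := by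
      intro x hx hxe
      rcases two x hx with h | h
      · exact hsc ((hcong x c h).symm.trans (hxe.trans h))
      · have hall : ∀ y, y ≠ 0 → wW ψ D (y * e) = wW ψ D (c * e) := by
          intro y hy
          rcases two y hy with h1 | h1
          · exact hcong y c h1
          · rw [hcong y x (h1.trans h.symm), hxe, h]
        have h3 := hall (c * e⁻¹) (mul_ne_zero hc (inv_ne_zero he0))
        rw [inv_mul_cancel_right₀ he0] at h3
        exact hsc h3.symm
    have hsum : ∑ x ∈ Finset.univ.erase (0:K), wW ψ D (x * e) = ∑ x ∈ Finset.univ.erase (0:K), wW ψ D x := by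
      rw [Finset.sum_erase _ (by simp [w0 ψ hψ D hinj]), Finset.sum_erase _ (w0 ψ hψ D hinj)]
      exact Fintype.sum_equiv (Equiv.mulRight₀ e he0) _ _ fun x => rfl
    have hT : ∑ x ∈ Finset.univ.erase (0:K), (wW ψ D (x * e) + wW ψ D x) = ((Fintype.card K : ℂ) - 1) * (wW ψ D c + wW ψ D (c * e)) := by
      rw [← hcard, ← nsmul_eq_mul, ← Finset.sum_const]
      refine Finset.sum_congr rfl fun x hx => ?_
      have hx := Finset.ne_of_mem_erase hx
      have h0 := hne x hx
      rcases two x hx with h | h <;> rcases two (x*e) (mul_ne_zero hx he0) with h1 | h1 <;> simp_all [add_comm]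
    rw [Finset.sum_add_distrib, hsum, S1] at hT
    obtain ⟨k, hk⟩ := rat_int (wW ψ D c + wW ψ D (c * e)) ((wW_isIntegral ψ hp hpow D c).add (wW_isIntegral ψ hp hpow D _))
      (Fintype.card K - 1) (2 * Fintype.card K) (by omega) (by push_cast; rw [← hT]; ring)
    rw [hk] at hT
    have hT' : (Fintype.card K : ℤ) + Fintype.card K = ((Fintype.card K : ℤ) - 1) * k := by exact_mod_cast hT
    have : ((Fintype.card K : ℤ) - 1) ∣ 2 := ⟨k - 2, by linarith⟩
    have := Int.le_of_dvd (by norm_num) this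
    omega

end

lemma frob_aux (p : ℕ) [Fact p.Prime] (K : Type) [Field K] [Fintype K]
    [Algebra (ZMod p) K] (D : ℕ) (hinj : Function.Injective (fun x : K => x ^ D)) (hD0 : D ≠ 0) (a : K)
    (h : ∀ x : K, Algebra.trace (ZMod p) K (x ^ D + a * x) = 0) :
    ∃ j : ℕ, ∀ x : K, x ^ D = x ^ (p ^ j) := by
  have hbij := Finite.injective_iff_bijective.1 hinj
  have hadd : ∀ x y : K, (x + y)^D = x^D + y^D := by
    intro x y
    rw [← sub_eq_zero]
    apply (traceForm_nondegenerate (ZMod p) K).1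
    intro z
    obtain ⟨w, rfl⟩ := hbij.2 z
    rw [Algebra.traceForm_apply]
    have e : ((x + y)^D - (x^D + y^D)) * w^D = ((w*(x+y))^D + a * (w*(x+y))) - ((w*x)^D + a * (w*x)) - ((w*y)^D + a * (w*y)) := by
      simp only [mul_pow]; ring
    simp only [e, map_sub, h, sub_zero]
  let f : K →+* K :=
    { toFun := fun x => x ^ D, map_one' := one_pow _, map_mul' := fun x y => mul_pow x y D
      map_zero' := zero_pow hD0, map_add' := hadd }
  have hfc : f.comp (algebraMap (ZMod p) K) = algebraMap (ZMod p) K := Subsingleton.elim _ _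
  let g : K →ₐ[ZMod p] K := { f with commutes' := fun r => RingHom.congr_fun hfc r }
  obtain ⟨j, hj⟩ := (FiniteField.bijective_frobeniusAlgHom_pow (ZMod p) K).2 g
  refine ⟨j, fun x => ?_⟩
  have : g x = x ^ D := rfl
  rw [← this, ← hj]
  simp [AlgHom.coe_pow, FiniteField.coe_frobeniusAlgHom, pow_iterate]

theorem stmt0 (p : ℕ) [Fact p.Prime] (K : Type) [Field K] [Fintype K] [CharP K p]
    [Algebra (ZMod p) K]
    (d : ℤ) (hd : Int.gcd d ((Fintype.card K : ℤ) - 1) = 1)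
    (hnd : ¬ IsDegenerate p (Fintype.card K) d) :
    3 ≤ (weilValues p K d).ncard := by
  have hp : p.Prime := Fact.out
  have hq1 : 1 < Fintype.card K := Fintype.one_lt_card
  have hq : 4 ≤ Fintype.card K := by
    by_contra hc
    apply hnd
    refine ⟨0, ?_⟩
    have : Fintype.card K = 2 ∨ Fintype.card K = 3 := by omega
    rcases this with h | h
    · rw [h]; norm_num; exact Int.modEq_one
    · rw [h] at hd ⊢
      norm_num at hd ⊢
      have : ¬ (2:ℤ) ∣ d := fun h2 => by
        have : (2:ℤ) ∣ Int.gcd d 2 := Int.dvd_coe_gcd h2 dvd_rfl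
        rw [hd] at this; norm_num at this
      unfold Int.ModEq; omega
  obtain ⟨D, hDd⟩ : ∃ D : ℕ, (D : ℤ) = d % ((Fintype.card K : ℤ) - 1) :=
    ⟨(d % ((Fintype.card K : ℤ) - 1)).toNat, Int.toNat_of_nonneg (Int.emod_nonneg _ (by omega))⟩
  have hmod : (D : ℤ) ≡ d [ZMOD (Fintype.card K : ℤ) - 1] := by
    rw [hDd]; exact Int.mod_modEq _ _
  have hcast : ((Fintype.card K - 1 : ℕ) : ℤ) = (Fintype.card K : ℤ) - 1 := by
    rw [Nat.cast_sub (by omega)]; simp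
  have hcop : D.Coprime (Fintype.card K - 1) := by
    have : Int.gcd (D:ℤ) ((Fintype.card K : ℤ) - 1) = 1 := by
      rw [hDd, Int.gcd_emod, hd]
    rw [← hcast, Int.gcd_natCast_natCast] at this
    exact this
  have hD0 : D ≠ 0 := by
    rintro rfl
    rw [Nat.coprime_zero_left] at hcop; omega
  have hd0 : d ≠ 0 := by
    rintro rfl
    simp at hDd; exact hD0 hDd
  have hinj : Function.Injective (fun x : K => x ^ D) := pow_inj_aux hcop hD0
  have hpow : ∀ x : K, x ^ d = x ^ D := by
    intro x
    by_cases hx : x = 0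
    · rw [hx, zero_zpow _ hd0, zero_pow hD0]
    · obtain ⟨k, hk⟩ := hmod.dvd
      have : d = D + ((Fintype.card K - 1 : ℕ) : ℤ) * k := by rw [hcast]; linarith
      rw [this, zpow_add₀ hx, zpow_mul, zpow_natCast, zpow_natCast, FiniteField.pow_card_sub_one_eq_one _ hx]
      simp
  let ψ : AddChar K ℂ := (ZMod.stdAddChar (N := p)).compAddMonoidHom (Algebra.trace (ZMod p) K).toAddMonoidHom
  have hψa : ∀ x, ψ x = ZMod.stdAddChar (Algebra.trace (ZMod p) K x) := fun x => rfl
  have hψc : ∀ x, canonicalAddChar p K x = ψ x := by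
    intro x
    rw [hψa, ZMod.stdAddChar_apply, ZMod.toCircle_apply]; rfl
  have hW : ∀ a, weilSum p K d a = wW ψ D a := by
    intro a
    simp only [weilSum, wW, hψc, hpow]
  have hζ : IsPrimitiveRoot (Complex.exp (2 * Real.pi * Complex.I / p)) p :=
    Complex.isPrimitiveRoot_exp p hp.ne_zero
  have ht : ∀ x, ψ x = Complex.exp (2 * Real.pi * Complex.I / p) ^ (Algebra.trace (ZMod p) K x).val := by
    intro x
    rw [← hψc, canonicalAddChar, ← Complex.exp_nat_mul]
    congr 1; ring
  have hψ1 : ∀ x, ψ x = 1 → Algebra.trace (ZMod p) K x = 0 := by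
    intro x hx
    apply ZMod.injective_stdAddChar
    rw [AddChar.map_zero_eq_one, ← hψa, hx]
  have hψ : ψ.IsPrimitive := by
    apply AddChar.IsPrimitive.of_ne_one
    intro h
    apply one_ne_zero (α := K)
    apply (traceForm_nondegenerate (ZMod p) K).1
    intro z
    rw [Algebra.traceForm_apply]
    exact hψ1 _ (by rw [h]; rfl)
  have hnd' : ∀ a : K, a ≠ 0 → ¬ ∀ x, ψ (x ^ D + a * x) = 1 := by
    intro a _ hx
    obtain ⟨j, hj⟩ := frob_aux p K D hinj hD0 a fun x => hψ1 _ (hx x)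
    apply hnd
    refine ⟨j, hmod.symm.trans ?_⟩
    obtain ⟨g, hg⟩ := IsCyclic.exists_generator (α := Kˣ)
    have ho : orderOf g = Fintype.card K - 1 := by
      rw [orderOf_eq_card_of_forall_mem_zpowers hg, Nat.card_eq_fintype_card, Fintype.card_units]
    have : g ^ D = g ^ (p ^ j) := by
      ext; push_cast; exact hj _
    rw [pow_eq_pow_iff_modEq, ho, ← Int.natCast_modEq_iff, hcast] at this
    exact_mod_cast this
  by_contra hlt
  have hfin : (weilValues p K d).Finite := by
    have : weilValues p K d ⊆ Set.range (weilSum p K d) := by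
      rintro w ⟨a, -, h⟩; exact ⟨a, h⟩
    exact (Set.finite_range _).subset this
  suffices H : ∃ a b : K, a ≠ 0 ∧ b ≠ 0 ∧ ∀ c, c ≠ 0 → wW ψ D c = wW ψ D a ∨ wW ψ D c = wW ψ D b by
    obtain ⟨a, b, ha, hb, hab⟩ := H
    exact main_aux ψ hψ hp _ hζ _ ht D hinj hD0 hq hnd' a b ha hb hab
  by_contra H
  push Not at H
  obtain ⟨c, hc, hc1, -⟩ := H 1 1 one_ne_zero one_ne_zero
  obtain ⟨e, he, he1, he2⟩ := H 1 c one_ne_zero hc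
  apply hlt
  have hsub : (({wW ψ D 1, wW ψ D c, wW ψ D e} : Finset ℂ) : Set ℂ) ⊆ weilValues p K d := by
    intro w hw
    simp only [Finset.coe_insert, Finset.coe_singleton, Set.mem_insert_iff, Set.mem_singleton_iff] at hw
    rcases hw with rfl | rfl | rfl
    · exact ⟨1, one_ne_zero, hW _⟩
    · exact ⟨c, hc, hW _⟩
    · exact ⟨e, he, hW _⟩
  have := Set.ncard_le_ncard hsub hfin
  rwa [Set.ncard_coe_finset, Finset.card_eq_three.2 ⟨_, _, _, hc1.symm, he1.symm, he2.symm, rfl⟩] at this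
end

section
/- Let K be a finite field of characteristic p and let d be an integer with gcd(d, |K| − 1) = 1. If the set {W_{K,d}(a) : a ∈ K^×} has exactly 3 elements, then d ≡ 1 (mod p − 1), for every a ∈ K^× the value W_{K,d}(a) is a rational integer (i.e., equals n for some n ∈ ℤ), and there exists a ∈ K^× with W_{K,d}(a) = 0. -/
open scoped BigOperators Classical
lemma int_split (p : ℕ) (hp : p.Prime) (X : ℤ) (hX : X ≠ 0) :
    ∃ (a : ℕ) (x : ℤ), X = (p:ℤ)^a * x ∧ ¬ (p:ℤ) ∣ x := by
  have hf : FiniteMultiplicity (p:ℤ) X := by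
    rw [Int.finiteMultiplicity_iff]
    refine ⟨?_, hX⟩
    simpa using hp.one_lt.ne'
  obtain ⟨c, h1, h2⟩ := hf.exists_eq_pow_mul_and_not_dvd
  exact ⟨_, c, h1, h2⟩

lemma not_dvd_pow_succ (p : ℕ) (hp : p.Prime) (a : ℕ) (x : ℤ) (hx : ¬ (p:ℤ) ∣ x) (k : ℕ)
    (hk : a < k) : ¬ (p:ℤ)^k ∣ (p:ℤ)^a * x := by
  intro h
  apply hx
  have h1 : (p:ℤ)^(a+1) ∣ (p:ℤ)^a * x := (pow_dvd_pow _ hk).trans h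
  rw [pow_succ] at h1
  exact (mul_dvd_mul_iff_left (pow_ne_zero _ (by exact_mod_cast hp.ne_zero))).1 h1

lemma pow_le_abs (p : ℕ) (hp : p.Prime) (a : ℕ) (X x : ℤ) (hX : X ≠ 0) (h : X = (p:ℤ)^a * x) :
    (p:ℤ)^a ≤ |X| := by
  apply Int.le_of_dvd (abs_pos.2 hX)
  rw [dvd_abs]; exact ⟨x, h⟩

lemma not_dvd_qsub (p : ℕ) (hp : p.Prime) (n : ℕ) (hn : 0 < n) : ¬ (p:ℤ) ∣ (p:ℤ)^n - 1 := by
  intro h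
  have h1 : (p:ℤ) ∣ (p:ℤ)^n := dvd_pow_self _ hn.ne'
  have h2 : (p:ℤ) ∣ 1 := by simpa using dvd_sub h1 h
  have := Int.le_of_dvd one_pos h2
  have := hp.two_le
  omega

lemma ratA (p : ℕ) (hp : p.Prime) (n : ℕ) (hn : 0 < n) (X Y Z M : ℤ)
    (hX : X ≠ 0) (hY : Y ≠ 0) (hZ : Z ≠ 0)
    (bX : |X| < (p:ℤ)^n) (bY : |Y| < (p:ℤ)^n) (bZ : |Z| < (p:ℤ)^n)
    (h : X * Y * Z * ((p:ℤ)^n - 1) = ((p:ℤ)^n)^2 * (M - (X+Y+Z)) + (p:ℤ)^n * (X*Y+Y*Z+Z*X)) :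
    (p:ℤ) * (p:ℤ)^n ∣ X * Y ∧ (p:ℤ) * (p:ℤ)^n ∣ Y * Z ∧
    (p:ℤ) ∣ X ∧ (p:ℤ) ∣ Y ∧ (p:ℤ) ∣ Z := by
  obtain ⟨a, x, ha, hx⟩ := int_split p hp X hX
  obtain ⟨b, y, hb, hy⟩ := int_split p hp Y hY
  obtain ⟨c, z, hc, hz⟩ := int_split p hp Z hZ
  have h1p : (1:ℤ) < p := by exact_mod_cast hp.one_lt
  have an : a < n := (pow_lt_pow_iff_right₀ h1p).1 ((pow_le_abs p hp a X x hX ha).trans_lt bX)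
  have bn : b < n := (pow_lt_pow_iff_right₀ h1p).1 ((pow_le_abs p hp b Y y hY hb).trans_lt bY)
  have cn : c < n := (pow_lt_pow_iff_right₀ h1p).1 ((pow_le_abs p hp c Z z hZ hc).trans_lt bZ)
  have pp : Prime (p:ℤ) := Nat.prime_iff_prime_int.1 hp
  have key : 2 * n ≤ a + b + c := by
    by_contra hlt
    push Not at hlt
    have hnd : ¬ (p:ℤ)^(a+b+c+1) ∣ (p:ℤ)^(a+b+c) * (x*y*z*((p:ℤ)^n-1)) := by
      apply not_dvd_pow_succ p hp _ _ _ _ (Nat.lt_succ_self _)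
      intro hh
      rcases pp.dvd_or_dvd hh with hh | hh
      · rcases pp.dvd_or_dvd hh with hh | hh
        · rcases pp.dvd_or_dvd hh with hh | hh
          · exact hx hh
          · exact hy hh
        · exact hz hh
      · exact not_dvd_qsub p hp n hn hh
    apply hnd
    have e : (p:ℤ)^(a+b+c) * (x*y*z*((p:ℤ)^n-1)) = X * Y * Z * ((p:ℤ)^n - 1) := by
      rw [ha, hb, hc]; ring
    rw [e, h]
    apply dvd_add
    · apply Dvd.dvd.mul_right
      rw [← pow_mul]
      exact pow_dvd_pow _ (by omega)
    · rw [mul_add, mul_add]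
      refine dvd_add (dvd_add ?_ ?_) ?_
      · rw [ha, hb]
        have : (p:ℤ)^n * ((p:ℤ)^a * x * ((p:ℤ)^b*y)) = (p:ℤ)^(n+a+b) * (x*y) := by ring
        rw [this]
        exact Dvd.dvd.mul_right (pow_dvd_pow _ (by omega)) _
      · rw [hb, hc]
        have : (p:ℤ)^n * ((p:ℤ)^b * y * ((p:ℤ)^c*z)) = (p:ℤ)^(n+b+c) * (y*z) := by ring
        rw [this]
        exact Dvd.dvd.mul_right (pow_dvd_pow _ (by omega)) _
      · rw [ha, hc]
        have : (p:ℤ)^n * ((p:ℤ)^c * z * ((p:ℤ)^a*x)) = (p:ℤ)^(n+a+c) * (z*x) := by ring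
        rw [this]
        exact Dvd.dvd.mul_right (pow_dvd_pow _ (by omega)) _
  refine ⟨?_, ?_, ?_, ?_, ?_⟩
  · rw [ha, hb, ← pow_succ', show (p:ℤ)^a * x * ((p:ℤ)^b*y) = (p:ℤ)^(a+b) * (x*y) by ring]
    exact Dvd.dvd.mul_right (pow_dvd_pow _ (by omega)) _
  · rw [hc, hb, ← pow_succ', show (p:ℤ)^b * y * ((p:ℤ)^c*z) = (p:ℤ)^(b+c) * (y*z) by ring]
    exact Dvd.dvd.mul_right (pow_dvd_pow _ (by omega)) _
  · rw [ha]; exact Dvd.dvd.mul_right (dvd_pow_self _ (by omega)) _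
  · rw [hb]; exact Dvd.dvd.mul_right (dvd_pow_self _ (by omega)) _
  · rw [hc]; exact Dvd.dvd.mul_right (dvd_pow_self _ (by omega)) _

lemma ratB (p q s t : ℤ) (hp : 2 ≤ p) (hq : 2 ≤ q) (hs : s < 0) (ht : 0 < t) (hsq : -q < s)
    (hpt : p ∣ t) (hst : p * q ∣ s * t)
    (hE : 0 ≤ q^2 - q*(s+t) + s*t*(q-1)) : False := by
  have h1 : p * q ≤ -(s*t) := by
    apply Int.le_of_dvd
    · nlinarith
    · exact (dvd_neg).2 hst
  have h2 : 2 ≤ t := hp.trans (Int.le_of_dvd ht hpt)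
  have h3 : 2 * q ≤ p * q := by nlinarith
  have h4 : s * t * (q-1) ≤ -(2*q) * (q-1) := by
    apply mul_le_mul_of_nonneg_right <;> linarith
  have h5 : 0 ≤ q * (q - (s+t) - 2*(q-1)) := by nlinarith
  have h6 : 0 ≤ q - (s+t) - 2*(q-1) := by
    by_contra hh
    push Not at hh
    nlinarith
  linarith

lemma sq_bd (q X Y Z N1 N2 N3 : ℤ) (hq : 2 ≤ q) (h1 : 0 < N1) (h2 : 0 < N2) (h3 : 0 < N3)
   (hY : Y ≠ 0) (e2 : N1 * X^2 + N2*Y^2+N3*Z^2 = q^2) : |X| < q := by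
  apply abs_lt_of_sq_lt_sq _ (by omega)
  have : 0 < Y^2 := by positivity
  nlinarith [sq_nonneg X, sq_nonneg Z, mul_pos h2 this, mul_nonneg h3.le (sq_nonneg Z), mul_nonneg (show 0 ≤ N1 - 1 by omega) (sq_nonneg X)]

lemma ratC (p : ℕ) (hp : p.Prime) (n : ℕ) (hn : 0 < n) (X Y Z M N1 N2 N3 : ℤ)
    (hX : X ≠ 0) (hY : Y ≠ 0) (hZ : Z ≠ 0) (hXY : X < Y) (hYZ : Y < Z)
    (h1 : 0 < N1) (h2 : 0 < N2) (h3 : 0 < N3)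
    (e0 : N1 + N2 + N3 = (p:ℤ)^n - 1)
    (e1 : N1 * X + N2 * Y + N3 * Z = (p:ℤ)^n)
    (e2 : N1 * X^2 + N2 * Y^2 + N3 * Z^2 = ((p:ℤ)^n)^2)
    (h : X * Y * Z * ((p:ℤ)^n - 1) = ((p:ℤ)^n)^2 * (M - (X+Y+Z)) + (p:ℤ)^n * (X*Y+Y*Z+Z*X)) :
    False := by
  have h2p : (2:ℤ) ≤ p := by exact_mod_cast hp.two_le
  have h2q : (2:ℤ) ≤ (p:ℤ)^n := h2p.trans (le_self_pow₀ (by omega) hn.ne')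
  have bX := sq_bd _ X Y Z N1 N2 N3 h2q h1 h2 h3 hY e2
  have bY := sq_bd _ Y X Z N2 N1 N3 h2q h2 h1 h3 hX (by linarith)
  have bZ := sq_bd _ Z X Y N3 N1 N2 h2q h3 h1 h2 hX (by linarith)
  obtain ⟨d1, d2, f1, f2, f3⟩ := ratA p hp n hn X Y Z M hX hY hZ bX bY bZ h
  generalize (p:ℤ)^n = q at *
  rw [abs_lt] at bX bY bZ
  rcases lt_or_gt_of_ne hY with y0 | y0
  · rcases lt_or_gt_of_ne hZ with z0 | z0
    · nlinarith
    · apply ratB p q Y Z h2p h2q y0 z0 bY.1 f3 d2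
      have : q^2 - q*(Y+Z) + Y*Z*(q-1) = N1 * ((Y-X)*(Z-X)) := by
        rw [← e2, ← e0]; linear_combination (Y+Z) * e1
      rw [this]
      have := mul_pos (sub_pos.2 hXY) (sub_pos.2 (hXY.trans hYZ))
      positivity
  · rcases lt_or_gt_of_ne hX with x0 | x0
    · apply ratB p q X Y h2p h2q x0 y0 bX.1 f2 d1
      have : q^2 - q*(X+Y) + X*Y*(q-1) = N3 * ((Z-X)*(Z-Y)) := by
        rw [← e2, ← e0]; linear_combination (X+Y) * e1
      rw [this]
      have := mul_pos (sub_pos.2 hYZ) (sub_pos.2 (hXY.trans hYZ))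
      nlinarith
    · have a1 : 0 < N1 * (X * (q - X)) := mul_pos h1 (mul_pos x0 (by linarith))
      have a2 : 0 < N2 * (Y * (q - Y)) := mul_pos h2 (mul_pos y0 (by linarith))
      have a3 : 0 < N3 * (Z * (q - Z)) := mul_pos h3 (mul_pos (by linarith) (by linarith))
      have : N1 * (X * (q - X)) + N2 * (Y * (q - Y)) + N3 * (Z * (q - Z)) = 0 := by
        linear_combination q * e1 - e2
      linarith

lemma ratD (p : ℕ) (hp : p.Prime) (n : ℕ) (hn : 0 < n) (X Y Z M N1 N2 N3 : ℤ)
    (hX : X ≠ 0) (hY : Y ≠ 0) (hZ : Z ≠ 0) (hXY : X ≠ Y) (hYZ : Y ≠ Z) (hXZ : X ≠ Z)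
    (h1 : 0 < N1) (h2 : 0 < N2) (h3 : 0 < N3)
    (e0 : N1 + N2 + N3 = (p:ℤ)^n - 1)
    (e1 : N1 * X + N2 * Y + N3 * Z = (p:ℤ)^n)
    (e2 : N1 * X^2 + N2 * Y^2 + N3 * Z^2 = ((p:ℤ)^n)^2)
    (h : X * Y * Z * ((p:ℤ)^n - 1) = ((p:ℤ)^n)^2 * (M - (X+Y+Z)) + (p:ℤ)^n * (X*Y+Y*Z+Z*X)) :
    False := by
  rcases lt_or_gt_of_ne hXY with a | a <;> rcases lt_or_gt_of_ne hYZ with b | b <;>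
    rcases lt_or_gt_of_ne hXZ with c | c
  · exact ratC p hp n hn X Y Z M N1 N2 N3 hX hY hZ a b h1 h2 h3 (by linarith) (by linarith) (by linarith) (by linarith)
  · omega
  · exact ratC p hp n hn X Z Y M N1 N3 N2 hX hZ hY c b h1 h3 h2 (by linarith) (by linarith) (by linarith) (by linarith)
  · exact ratC p hp n hn Z X Y M N3 N1 N2 hZ hX hY c a h3 h1 h2 (by linarith) (by linarith) (by linarith) (by linarith)
  · exact ratC p hp n hn Y X Z M N2 N1 N3 hY hX hZ a c h2 h1 h3 (by linarith) (by linarith) (by linarith) (by linarith)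
  · exact ratC p hp n hn Y Z X M N2 N3 N1 hY hZ hX b c h2 h3 h1 (by linarith) (by linarith) (by linarith) (by linarith)
  · omega
  · exact ratC p hp n hn Z Y X M N3 N2 N1 hZ hY hX b a h3 h2 h1 (by linarith) (by linarith) (by linarith) (by linarith)

lemma par (p : ℕ) (hp : p.Prime) (c : ℕ) (u k : ℤ) (hu : ¬ (p:ℤ) ∣ u)
    (h : k^2 = p * ((p:ℤ)^(2*c) * u)) : False := by
  have pp : Prime (p:ℤ) := Nat.prime_iff_prime_int.1 hp
  have hk : k ≠ 0 := by
    rintro rfl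
    have h0 : (p:ℤ) ≠ 0 := pp.ne_zero
    have : u = 0 := by
      by_contra hu0
      have : (p:ℤ) * ((p:ℤ)^(2*c) * u) ≠ 0 := by positivity
      exact this (by rw [← h]; ring)
    exact hu (this ▸ dvd_zero _)
  obtain ⟨e, k', hk1, hk2⟩ := int_split p hp k hk
  have h1 : (p:ℤ)^(2*e) * k'^2 = (p:ℤ)^(2*c+1) * u := by
    rw [hk1] at h; linear_combination h
  have hk3 : ¬ (p:ℤ) ∣ k'^2 := fun hh => hk2 (pp.dvd_of_dvd_pow hh)
  rcases lt_or_ge (2*e) (2*c+1) with hlt | hge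
  · exact not_dvd_pow_succ p hp _ _ hk3 _ hlt ⟨u, h1⟩
  · exact not_dvd_pow_succ p hp _ _ hu (2*e) (by omega) ⟨k'^2, h1.symm⟩

lemma quadT (p : ℕ) (hp : p.Prime) (hp3 : p ≠ 2) (T P' k : ℤ) (b : ℕ)
    (h : k^2 = p * (T^2 - 4 * ((p:ℤ)^b * P'))) : (p:ℤ)^((b+1)/2) ∣ T := by
  have pp : Prime (p:ℤ) := Nat.prime_iff_prime_int.1 hp
  by_cases hT : T = 0
  · rw [hT]; exact dvd_zero _
  obtain ⟨t, T', h1, h2⟩ := int_split p hp T hT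
  rcases lt_or_ge (2*t) b with hlt | hge
  · exfalso
    obtain ⟨r, rfl⟩ : ∃ r, b = 2*t + (r+1) := ⟨b - 2*t - 1, by omega⟩
    apply par p hp t (T'^2 - p * (4 * (p:ℤ)^r * P')) k
    · intro hh
      have : (p:ℤ) ∣ T'^2 := by
        have := dvd_add hh (Dvd.intro (4 * (p:ℤ)^r * P') rfl)
        simpa using this
      exact h2 (pp.dvd_of_dvd_pow this)
    · rw [h, h1]; ring
  · rw [h1]
    exact Dvd.dvd.mul_right (pow_dvd_pow _ (by omega)) _

lemma quadZero (p : ℕ) (hp : p.Prime) (n : ℕ) (m T P k : ℤ)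
    (hm : 0 < m)
    (e1 : m * T = (p:ℤ)^n)
    (e2 : m * (T^2 - 2 * P) = ((p:ℤ)^n)^2)
    (hk : k^2 = p * (T^2 - 4 * P)) : False := by
  have pp : Prime (p:ℤ) := Nat.prime_iff_prime_int.1 hp
  have h2p := hp.two_le
  have hT : T ≠ 0 := by
    rintro rfl
    have : (0:ℤ) < (p:ℤ)^n := by have := hp.pos; positivity
    simp at e1; omega
  obtain ⟨t, T', h1, h2⟩ := int_split p hp T hT
  have hD : T^2 - 4 * P = T^2 * (2*m-1) := by
    have : m * (T^2 - 4 * P) = m * (T^2 * (2*m-1)) := by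
      rw [← e1] at e2; linear_combination 2 * e2
    exact mul_left_cancel₀ hm.ne' this
  apply par p hp t (T'^2 * (2*m-1)) k
  · intro hh
    rcases pp.dvd_or_dvd hh with hh | hh
    · exact h2 (pp.dvd_of_dvd_pow hh)
    · obtain ⟨i, hi, hi2⟩ := (dvd_prime_pow pp n).1 ⟨T, e1.symm⟩
      have hmi : m = (p:ℤ)^i := by
        rcases Int.associated_iff.1 hi2 with h | h
        · exact h
        · have : (0:ℤ) < (p:ℤ)^i := by have := hp.pos; positivity
          omega
      rcases Nat.eq_zero_or_pos i with h0 | h0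
      · rw [h0] at hmi
        rw [hmi] at hh
        norm_num at hh
        have := Int.le_of_dvd one_pos hh
        omega
      · have : (p:ℤ) ∣ m := hmi ▸ dvd_pow_self _ h0.ne'
        have := dvd_sub (this.mul_left 2) hh
        simp at this
        have := Int.le_of_dvd one_pos this
        omega
  · rw [hk, hD, h1]; ring

set_option maxHeartbeats 2000000 in
lemma quadMain (p : ℕ) (hp : p.Prime) (hp3 : p ≠ 2) (n : ℕ) (hn : 0 < n) (A T P N m M k : ℤ)
    (hA : A ≠ 0) (hN : 0 < N) (hm : 0 < m) (hD : 0 < T^2 - 4 * P)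
    (e0 : N + 2 * m = (p:ℤ)^n - 1)
    (e1 : N * A + m * T = (p:ℤ)^n)
    (e2 : N * A^2 + m * (T^2 - 2 * P) = ((p:ℤ)^n)^2)
    (e3 : A * P * ((p:ℤ)^n - 1) = ((p:ℤ)^n)^2 * (M - A - T) + (p:ℤ)^n * (A*T+P))
    (hk : k^2 = p * (T^2 - 4 * P)) : False := by
  have pp : Prime (p:ℤ) := Nat.prime_iff_prime_int.1 hp
  have h3p : (3:ℤ) ≤ p := by
    have := hp.two_le
    omega
  have h1p : (1:ℤ) < p := by linarith
  have hP : P ≠ 0 := by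
    rintro rfl
    have hT : T ≠ 0 := by rintro rfl; norm_num at hD
    obtain ⟨t, T', h1, h2⟩ := int_split p hp T hT
    apply par p hp t (T'^2) k (fun hh => h2 (pp.dvd_of_dvd_pow hh))
    rw [hk, h1]; ring
  obtain ⟨a, A', hA1, hA2⟩ := int_split p hp A hA
  obtain ⟨b, P', hP1, hP2⟩ := int_split p hp P hP
  obtain ⟨T', hT1⟩ := quadT p hp hp3 T P' k b (by rw [hk, hP1])
  have hPa := pow_le_abs p hp b P P' hP hP1
  have hAa := pow_le_abs p hp a A A' hA hA1
  set t := (b+1)/2 with ht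
  have q0 : (0:ℤ) < (p:ℤ)^n := by positivity
  have hA2' : (p:ℤ)^(2*a) ≤ A^2 := by
    rw [← sq_abs A, mul_comm 2 a, pow_mul]; gcongr
  -- size bounds
  have hBC : 2 * |P| ≤ T^2 - 2 * P := by
    rcases abs_cases P with ⟨h, _⟩ | ⟨h, _⟩ <;> rw [h] <;> nlinarith [sq_nonneg T]
  have hPpos : 0 < |P| := abs_pos.2 hP
  have hmP : N * A^2 + 2 * m * |P| ≤ ((p:ℤ)^n)^2 := by nlinarith
  have hApos : 0 < A^2 := by positivity
  have an : a < n := by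
    have : (p:ℤ)^(2*a) < (p:ℤ)^(2*n) := by
      rw [mul_comm 2 n, pow_mul (p:ℤ) n 2]; nlinarith [mul_pos hm hPpos]
    have := (pow_lt_pow_iff_right₀ h1p).1 this
    omega
  have hmb : 2 * m * (p:ℤ)^b < (p:ℤ)^(2*n) := by
    rw [mul_comm 2 n, pow_mul (p:ℤ) n 2]
    nlinarith [mul_pos hN hApos]
  have bn : b < 2 * n := by
    have : (p:ℤ)^b < (p:ℤ)^(2*n) := by nlinarith [pow_pos (show (0:ℤ)<p by linarith) b]
    exact (pow_lt_pow_iff_right₀ h1p).1 this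
  have key : 2 * n ≤ a + b := by
    by_contra hlt
    push Not at hlt
    have hnd : ¬ (p:ℤ)^(a+b+1) ∣ (p:ℤ)^(a+b) * (A'*P'*((p:ℤ)^n-1)) := by
      apply not_dvd_pow_succ p hp _ _ _ _ (Nat.lt_succ_self _)
      intro hh
      rcases pp.dvd_or_dvd hh with hh | hh
      · rcases pp.dvd_or_dvd hh with hh | hh
        · exact hA2 hh
        · exact hP2 hh
      · exact not_dvd_qsub p hp n hn hh
    apply hnd
    have e : (p:ℤ)^(a+b) * (A'*P'*((p:ℤ)^n-1)) = A * P * ((p:ℤ)^n - 1) := by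
      rw [hA1, hP1]; ring
    rw [e, e3]
    apply dvd_add
    · apply Dvd.dvd.mul_right
      rw [← pow_mul]
      exact pow_dvd_pow _ (by omega)
    · rw [mul_add]
      refine dvd_add ?_ ?_
      · rw [hA1, hT1, show (p:ℤ)^n * ((p:ℤ)^a * A' * ((p:ℤ)^t*T')) = (p:ℤ)^(n+a+t) * (A'*T') by ring]
        exact Dvd.dvd.mul_right (pow_dvd_pow _ (by omega)) _
      · rw [hP1, show (p:ℤ)^n * ((p:ℤ)^b * P') = (p:ℤ)^(n+b) * P' by ring]
        exact Dvd.dvd.mul_right (pow_dvd_pow _ (by omega)) _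
  have h2m : 2 * m < (p:ℤ)^(2*n-b) := by
    have : (p:ℤ)^(2*n) = (p:ℤ)^(2*n-b) * (p:ℤ)^b := by rw [← pow_add]; congr 1; omega
    rw [this] at hmb
    exact lt_of_mul_lt_mul_right hmb (by positivity)
  have ha2 : 2 * a ≤ n := by
    by_contra hlt
    push Not at hlt
    obtain ⟨r, rfl⟩ : ∃ r, n = r + 1 := ⟨n-1, by omega⟩
    have h5 : (p:ℤ)^(2*(r+1)-b) ≤ (p:ℤ)^r := pow_le_pow_right₀ h1p.le (by omega)
    have h6 : (p:ℤ)^(r+2) ≤ (p:ℤ)^(2*a) := pow_le_pow_right₀ h1p.le (by omega)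
    have h7 : (p:ℤ)^(r+1) - (p:ℤ)^r ≤ N := by linarith
    have h8 : ((p:ℤ)^(r+1) - (p:ℤ)^r) * (p:ℤ)^(r+2) ≤ ((p:ℤ)^(r+1))^2 := by
      calc _ ≤ N * A^2 := by
            apply mul_le_mul h7 (h6.trans hA2') (by positivity) hN.le
        _ ≤ _ := by nlinarith [mul_pos hm hPpos]
    have h9 : ((p:ℤ)^(r+1) - (p:ℤ)^r) * (p:ℤ)^(r+2) - ((p:ℤ)^(r+1))^2 = ((p:ℤ)^(r+1))^2 * (p - 2) := by ring
    have : 0 < ((p:ℤ)^(r+1))^2 * ((p:ℤ) - 2) := mul_pos (by positivity) (by linarith)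
    linarith
  have hdN : (p:ℤ)^(b-2*a) ∣ N := by
    have E : N * (A^2 - A*T + P) = ((p:ℤ)^n)^2 - (p:ℤ)^n * T + P * ((p:ℤ)^n - 1) := by
      rw [← e0, ← e2]; linear_combination (-T) * e1 + T * e0 * 0
    have hu : ∃ u, A^2 - A*T+P = (p:ℤ)^(2*a) * u ∧ ¬ (p:ℤ) ∣ u := by
      obtain ⟨r, hr⟩ : ∃ r, t = a + (r + 1) := ⟨t - a - 1, by omega⟩
      obtain ⟨s, hs⟩ : ∃ s, b = 2*a + (s + 1) := ⟨b - 2*a - 1, by omega⟩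
      refine ⟨A'^2 + p * (-(p:ℤ)^r*A'*T' + (p:ℤ)^s * P'), ?_, ?_⟩
      · rw [hA1, hT1, hP1, hr, hs]; ring
      · intro hh
        exact hA2 (pp.dvd_of_dvd_pow ((dvd_add_left (Dvd.intro _ rfl)).1 hh))
    obtain ⟨u, hu1, hu2⟩ := hu
    have hR : (p:ℤ)^b ∣ N * (A^2 - A*T+P) := by
      rw [E]
      refine dvd_add (dvd_sub ?_ ?_) ?_
      · rw [← pow_mul]; exact pow_dvd_pow _ (by omega)
      · rw [hT1, ← mul_assoc, ← pow_add]
        exact Dvd.dvd.mul_right (pow_dvd_pow _ (by omega)) _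
      · rw [hP1, mul_assoc]; exact Dvd.intro _ rfl
    rw [hu1, show N * ((p:ℤ)^(2*a) * u) = (p:ℤ)^(2*a) * (N * u) by ring,
      show (p:ℤ)^b = (p:ℤ)^(2*a) * (p:ℤ)^(b-2*a) by rw [← pow_add]; congr 1; omega] at hR
    have := (mul_dvd_mul_iff_left (by positivity)).1 hR
    exact IsCoprime.dvd_of_dvd_mul_right
      (IsCoprime.pow_left ((Prime.coprime_iff_not_dvd pp).2 hu2)) this
  have hban : b - 2*a < n := by
    have h5 := Int.le_of_dvd hN hdN
    have : (p:ℤ)^(b-2*a) < (p:ℤ)^n := by linarith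
    exact (pow_lt_pow_iff_right₀ h1p).1 this
  have hd2 : (p:ℤ)^(b-2*a) ∣ 2*m+1 := by
    have h5 : (p:ℤ)^(b-2*a) ∣ (p:ℤ)^n := pow_dvd_pow _ hban.le
    have h6 : 2 * m + 1 = (p:ℤ)^n - N := by linarith
    rw [h6]; exact dvd_sub h5 hdN
  have h2m' := Int.le_of_dvd (by linarith) hd2
  have hle : b - 2*a ≤ 2*n-b := by
    have : (p:ℤ)^(b-2*a) ≤ (p:ℤ)^(2*n-b) := by linarith
    exact (pow_le_pow_iff_right₀ h1p).1 this
  have hn2 : n = 2*a := by omega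
  have hb3 : b = 3*a := by omega
  subst hn2 hb3
  have ea : 3*a-2*a = a := by omega
  have eb : 2*(2*a)-3*a = a := by omega
  rw [ea] at h2m'
  rw [eb] at h2m
  have h2 : 2*m = (p:ℤ)^a - 1 := by linarith
  have hN2 : N = (p:ℤ)^(2*a) - (p:ℤ)^a := by linarith
  have hpa : (p:ℤ) ≤ (p:ℤ)^a := le_self_pow₀ h1p.le (by omega)
  rw [pow_mul'] at hA2' hN2 hmP
  rw [pow_mul'] at hPa
  generalize (p:ℤ)^a = x at *
  have f1 : (x^2 - x) * x^2 ≤ N * A^2 := by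
    rw [hN2]; exact mul_le_mul_of_nonneg_left hA2' (by nlinarith)
  have f2 : (x-1) * x^3 ≤ 2*m*|P| := by
    rw [h2]; exact mul_le_mul_of_nonneg_left hPa (by linarith)
  have f3 : x^3 * (x - 2) ≤ 0 := by nlinarith
  have f4 : 0 < x^3 * (x-2) := mul_pos (by apply pow_pos; linarith) (by linarith)
  linarith

lemma gal (p : ℕ) [Fact p.Prime] (L : Type) [Field L] [NumberField L]
    [IsCyclotomicExtension {p} ℚ L] : ∃ (ι : L →+* ℂ) (z : L)
    (σ : L ≃ₐ[ℚ] L) (j : (ZMod p)ˣ),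
    ι z = Complex.exp (2 * Real.pi * Complex.I / p) ∧ IsPrimitiveRoot z p ∧
    (∀ x, x ∈ Subgroup.zpowers j) ∧ σ z = z ^ (j.val.val) ∧
    (∀ x : L, σ x = x → IsIntegral ℤ x → ∃ n : ℤ, x = n) := by
  have hp : p.Prime := Fact.out
  have : NeZero p := ⟨hp.ne_zero⟩
  let ι : L →ₐ[ℚ] ℂ := IsAlgClosed.lift
  have hz0 := IsCyclotomicExtension.zeta_spec p ℚ L
  have hιz : IsPrimitiveRoot (ι (IsCyclotomicExtension.zeta p ℚ L)) p := hz0.map_of_injective ι.injective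
  have hc := Complex.isPrimitiveRoot_exp p hp.ne_zero
  obtain ⟨i, hi, hi2⟩ := hιz.eq_pow_of_pow_eq_one hc.pow_eq_one
  let z : L := (IsCyclotomicExtension.zeta p ℚ L)^i
  have hz : ι z = Complex.exp (2 * Real.pi * Complex.I / p) := by rw [← hi2, map_pow]
  have hzp : IsPrimitiveRoot z p := by
    apply IsPrimitiveRoot.of_map_of_injective (f := ι) _ ι.injective
    rw [hz]; exact hc
  obtain ⟨j, hj⟩ := IsCyclic.exists_generator (α := (ZMod p)ˣ)
  let e := IsCyclotomicExtension.Rat.galEquivZMod p L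
  refine ⟨ι.toRingHom, z, e.symm j, j, hz, hzp, hj, ?_, ?_⟩
  · have := IsCyclotomicExtension.Rat.galEquivZMod_apply_of_pow_eq p L (e.symm j) hzp.pow_eq_one
    rw [this]
    show z ^ (e (e.symm j)).val.val = _
    rw [e.apply_symm_apply]
  · intro x hx hint
    have : IsGalois ℚ L := IsCyclotomicExtension.isGalois {p} ℚ L
    have hall : ∀ τ : L ≃ₐ[ℚ] L, τ x = x := by
      intro τ
      obtain ⟨k, hk⟩ := Subgroup.mem_zpowers_iff.1 (hj (e τ))
      have h1 : τ = (e.symm j)^k := by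
        rw [← map_zpow, hk, e.symm_apply_apply]
      have h2 : (e.symm j) ∈ MulAction.stabilizer (L ≃ₐ[ℚ] L) x := hx
      have h3 := Subgroup.zpow_mem _ h2 k
      rw [← h1] at h3
      exact h3
    obtain ⟨r, hr⟩ := (IsGalois.mem_range_algebraMap_iff_fixed (F := ℚ) x).2 hall
    rw [← hr] at hint
    have : IsIntegral ℤ r := (isIntegral_algebraMap_iff (algebraMap ℚ L).injective).1 hint
    obtain ⟨n, hn⟩ := IsIntegrallyClosed.isIntegral_iff.1 this
    refine ⟨n, ?_⟩
    rw [← hr, ← hn]; simp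

lemma gaussL (p : ℕ) [Fact p.Prime] (hp2 : p ≠ 2) {L : Type*} [Field L] [CharZero L] (z : L)
    (hz : IsPrimitiveRoot z p) (σ : L →+* L) (j : (ZMod p)ˣ) (hj : ∀ x, x ∈ Subgroup.zpowers j)
    (hσ : σ z = z ^ (j.val.val)) :
    ∃ γ : L, IsIntegral ℤ γ ∧ (γ^2 = p ∨ γ^2 = -p) ∧ σ γ = -γ := by
  have hp : p.Prime := Fact.out
  have : NeZero p := ⟨hp.ne_zero⟩
  let ψ := AddChar.zmodChar p hz.pow_eq_one
  have hψ : ψ.IsPrimitive := AddChar.zmodChar_primitive_of_primitive_root p hz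
  have hr : ringChar (ZMod p) ≠ 2 := by rw [ZMod.ringChar_zmod_n]; exact hp2
  let χ : MulChar (ZMod p) L := (quadraticChar (ZMod p)).ringHomComp (Int.castRingHom L)
  have hχ2 : χ.IsQuadratic := (quadraticChar_isQuadratic (ZMod p)).comp _
  have hχj : χ j = -1 := by
    have hns : ¬ IsSquare ((j : ZMod p)) := by
      intro hs
      obtain ⟨a, ha⟩ := quadraticChar_exists_neg_one (F := ZMod p) hr
      have ha0 : a ≠ 0 := by rintro rfl; simp at ha
      obtain ⟨k, hk⟩ := Subgroup.mem_zpowers_iff.1 (hj (Units.mk0 a ha0))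
      have hs2 : IsSquare j := by
        obtain ⟨r, hr⟩ := hs
        have hr0 : r ≠ 0 := by rintro rfl; simp at hr
        exact ⟨Units.mk0 r hr0, by ext; simpa using hr⟩
      have h3 : IsSquare (Units.mk0 a ha0) := by rw [← hk]; exact hs2.zpow k
      obtain ⟨r, hr⟩ := h3
      have : IsSquare a := ⟨r, by have := congrArg Units.val hr; simpa using this⟩
      exact (quadraticChar_neg_one_iff_not_isSquare.1 ha) this
    have := quadraticChar_neg_one_iff_not_isSquare.2 hns
    simp [χ, this]
  have hχ1 : χ ≠ 1 := by
    intro h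
    rw [h] at hχj
    rw [MulChar.one_apply_coe] at hχj
    norm_num at hχj
  refine ⟨gaussSum χ ψ, ?_, ?_, ?_⟩
  · refine IsIntegral.sum _ fun x _ => IsIntegral.mul ?_ ?_
    · simp only [χ, MulChar.ringHomComp_apply]
      exact isIntegral_algebraMap (R := ℤ)
    · rw [AddChar.zmodChar_apply]
      exact (hz.isIntegral hp.pos).pow _
  · rw [gaussSum_sq hχ1 hχ2 hψ, ZMod.card]
    rcases hχ2 (-1) with h | h | h
    · exfalso
      have : χ (-1) ^ 2 = 1 := by rw [← map_pow]; simp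
      rw [h] at this; norm_num at this
    · left; rw [h]; ring
    · right; rw [h]; ring
  · have h1 : σ (gaussSum χ ψ) = gaussSum χ (ψ.mulShift j) := by
      unfold gaussSum
      rw [map_sum]
      refine Finset.sum_congr rfl fun x _ => ?_
      rw [map_mul]
      congr 1
      · simp [χ]
      · have e1 : ψ x = z ^ x.val := AddChar.zmodChar_apply _ _
        have : ψ.mulShift j x = ψ x ^ (j.val.val) := by
          rw [← AddChar.mulShift_spec', ZMod.natCast_zmod_val]
        rw [this, e1, map_pow, hσ]
        ring
    have h2 := gaussSum_mulShift χ ψ j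
    rw [hχj] at h2
    rw [h1, ← h2]; ring

lemma cyc_inst (p : ℕ) [Fact p.Prime] : ∃ (L : Type) (_ : Field L) (_ : NumberField L),
    IsCyclotomicExtension {p} ℚ L := by
  have : NeZero ((p:ℕ):ℚ) := ⟨by exact_mod_cast (Fact.out : p.Prime).ne_zero⟩
  have h := CyclotomicField.isCyclotomicExtension p ℚ
  have : NeZero p := ⟨(Fact.out : p.Prime).ne_zero⟩
  refine ⟨CyclotomicField p ℚ, inferInstance, ?_, ?_⟩
  · infer_instance
  · have e : (DivisionRing.toRatAlgebra : Algebra ℚ (CyclotomicField p ℚ)) =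
        CyclotomicField.algebra p ℚ := Subsingleton.elim _ _
    rw [e]
    exact h


noncomputable def wsum {K : Type} [Field K] [Fintype K] {L : Type} [Field L] (ψ : AddChar K L) (d : ℤ) (a : K) : L := ∑ x : K, ψ (x ^ d + a * x)

lemma sumψ {K : Type} [Field K] [Fintype K] {L : Type} [Field L]
    (ψ : AddChar K L) (hψ : ψ.IsPrimitive) (c : K) :
    ∑ x : K, ψ (c * x) = if c = 0 then (Fintype.card K : L) else 0 := by
  have := AddChar.sum_mulShift c hψ
  simp_rw [mul_comm c]
  rw [this]; push_cast; rfl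

lemma zpow_bij {K : Type} [Field K] [Fintype K]
    (d : ℤ) (hd0 : d ≠ 0) (hd : Int.gcd d ((Fintype.card K : ℤ) - 1) = 1) :
    Function.Bijective (fun x : K => x ^ d) := by
  rw [← Finite.injective_iff_bijective]
  have one : ∀ u : Kˣ, u ^ d = 1 → u = 1 := by
    intro u hu
    have h1 : (orderOf u : ℤ) ∣ d := orderOf_dvd_iff_zpow_eq_one.2 hu
    have h2 : (orderOf u : ℤ) ∣ (Fintype.card K : ℤ) - 1 := by
      have := orderOf_dvd_card (x := u)
      rw [Fintype.card_units] at this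
      have h3 : ((Fintype.card K - 1 : ℕ) : ℤ) = (Fintype.card K : ℤ) - 1 := by
        have := Fintype.card_pos (α := K); omega
      rw [← h3]; exact_mod_cast this
    have h3 := Int.dvd_coe_gcd h1 h2
    rw [hd] at h3
    have h4 : orderOf u = 1 := by
      have : (orderOf u : ℤ) ∣ ((1:ℕ):ℤ) := h3
      exact Nat.dvd_one.1 (by exact_mod_cast this)
    exact orderOf_eq_one_iff.1 h4
  intro x y hxy
  simp only at hxy
  by_cases hx : x = 0
  · rw [hx, zero_zpow d hd0] at hxy
    rw [hx]; exact ((zpow_eq_zero_iff hd0).1 hxy.symm).symm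
  · have hy : y ≠ 0 := by
      rintro rfl
      rw [zero_zpow d hd0] at hxy
      exact hx ((zpow_eq_zero_iff hd0).1 hxy)
    have := one (Units.mk0 x hx / Units.mk0 y hy) (by
      ext; simp [div_zpow, hxy]
      exact zpow_ne_zero _ hy)
    have := congrArg Units.val this
    simp at this
    field_simp at this
    exact this


lemma sumψd {K : Type} [Field K] [Fintype K] {L : Type} [Field L] (ψ : AddChar K L) (hψ : ψ.IsPrimitive) (d : ℤ) (hb : Function.Bijective (fun x : K => x ^ d))
    (c : K) :
    ∑ x : K, ψ (c * x ^ d) = if c = 0 then (Fintype.card K : L) else 0 := by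
  rw [← sumψ ψ hψ c]
  exact Function.Bijective.sum_comp hb (fun y => ψ (c * y))

lemma w_zero {K : Type} [Field K] [Fintype K] {L : Type} [Field L] (ψ : AddChar K L) (hψ : ψ.IsPrimitive) (d : ℤ) (hb : Function.Bijective (fun x : K => x ^ d))
    : wsum ψ d 0 = 0 := by
  have := sumψd ψ hψ d hb 1
  simpa [wsum] using this

lemma mom1 {K : Type} [Field K] [Fintype K] {L : Type} [Field L] (ψ : AddChar K L) (hψ : ψ.IsPrimitive) (d : ℤ) (hd0 : d ≠ 0)
    : ∑ a : K, wsum ψ d a = Fintype.card K := by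
  unfold wsum
  rw [Finset.sum_comm]
  have : ∀ x : K, ∑ a : K, ψ (x^d + a*x) = if x = 0 then (Fintype.card K : L) else 0 := by
    intro x
    simp_rw [AddChar.map_add_eq_mul, ← Finset.mul_sum, mul_comm _ x, sumψ ψ hψ]
    split_ifs with h
    · subst h; simp [zero_zpow d hd0]
    · simp
  simp_rw [this]
  simp

lemma neg_zp {K : Type} [Field K] (d : ℤ) (hneg : (-1 : K) ^ d = -1)
    (x : K) : (-x)^d = -x^d := by
  rw [← neg_one_mul x, mul_zpow, hneg]; ring

lemma mom2 {K : Type} [Field K] [Fintype K] {L : Type} [Field L] (ψ : AddChar K L) (hψ : ψ.IsPrimitive) (d : ℤ) (hb : Function.Bijective (fun x : K => x ^ d)) (hneg : (-1 : K) ^ d = -1)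
    (b : K) : ∑ a : K, wsum ψ d a * wsum ψ d (b * a) =
    if b = 1 then (Fintype.card K : L)^2 else 0 := by
  have e1 : ∀ a, wsum ψ d a * wsum ψ d (b * a) =
      ∑ y : K, ∑ x : K, ψ (x^d + y^d) * ψ ((x + b * y) * a) := by
    intro a
    unfold wsum
    rw [Finset.sum_mul_sum, Finset.sum_comm]
    refine Finset.sum_congr rfl fun y _ => Finset.sum_congr rfl fun x _ => ?_
    rw [← AddChar.map_add_eq_mul, ← AddChar.map_add_eq_mul]
    congr 1; ring
  simp_rw [e1]
  rw [Finset.sum_comm]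
  have e2 : ∀ y : K, ∑ a : K, ∑ x : K, ψ (x^d + y^d) * ψ ((x + b * y) * a) =
      ψ ((1 - b^d) * y^d) * Fintype.card K := by
    intro y
    rw [Finset.sum_comm]
    simp_rw [← Finset.mul_sum, sumψ ψ hψ]
    rw [Finset.sum_eq_single (-(b*y))]
    · rw [if_pos (by ring)]
      congr 2
      rw [neg_zp d hneg, mul_zpow]; ring
    · intro x _ hx
      rw [if_neg, mul_zero]
      intro h; exact hx (by linear_combination h)
    · simp
  simp_rw [e2, ← Finset.sum_mul, sumψd ψ hψ d hb]
  have : (1 - b^d = 0) ↔ b = 1 := by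
    constructor
    · intro h
      apply hb.1
      simp only [one_zpow]
      linear_combination -h
    · rintro rfl; simp
  by_cases h : b = 1
  · rw [if_pos h, if_pos (this.2 h)]; ring
  · rw [if_neg h, if_neg (fun hh => h (this.1 hh))]; ring

lemma mom3 {K : Type} [Field K] [Fintype K] {L : Type} [Field L] (ψ : AddChar K L) (hψ : ψ.IsPrimitive) (d : ℤ) (hb : Function.Bijective (fun x : K => x ^ d)) (hneg : (-1 : K) ^ d = -1) (hd0 : d ≠ 0)
    : ∃ M : ℕ, ∑ a : K, wsum ψ d a ^ 3 = (Fintype.card K : L)^2 * M := by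
  refine ⟨(Finset.univ.filter (fun u : K => (-1-u)^d + 1 + u^d = 0)).card, ?_⟩
  have e1 : ∀ a, wsum ψ d a ^ 3 =
      ∑ y : K, ∑ z : K, ∑ x : K, ψ (x^d + y^d + z^d) * ψ ((x + y + z) * a) := by
    intro a
    unfold wsum
    rw [pow_succ, pow_two, Finset.sum_mul_sum, Finset.sum_mul]
    refine Finset.sum_congr rfl fun y _ => ?_
    rw [Finset.sum_mul_sum]
    refine Finset.sum_congr rfl fun z _ => ?_
    refine Finset.sum_congr rfl fun x _ => ?_
    rw [← AddChar.map_add_eq_mul, ← AddChar.map_add_eq_mul, ← AddChar.map_add_eq_mul]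
    congr 1; ring
  simp_rw [e1]
  rw [Finset.sum_comm]
  have e2 : ∀ y : K, ∑ a : K, ∑ z : K, ∑ x : K, ψ (x^d + y^d + z^d) * ψ ((x + y + z) * a) =
      (Fintype.card K : L) * ∑ u : K, ψ (((-1-u)^d + 1 + u^d) * y^d) := by
    intro y
    have e3 : ∑ a : K, ∑ z : K, ∑ x : K, ψ (x^d + y^d + z^d) * ψ ((x + y + z) * a) =
      (Fintype.card K : L) * ∑ z : K, ψ ((-y-z)^d + y^d + z^d) := by
      rw [Finset.sum_comm, Finset.mul_sum]
      refine Finset.sum_congr rfl fun z _ => ?_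
      rw [Finset.sum_comm]
      simp_rw [← Finset.mul_sum, sumψ ψ hψ]
      rw [Finset.sum_eq_single (-y-z)]
      · rw [if_pos (by ring)]; ring
      · intro x _ hx
        rw [if_neg, mul_zero]
        intro h; exact hx (by linear_combination h)
      · simp
    rw [e3]
    congr 1
    by_cases hy : y = 0
    · subst hy
      refine Finset.sum_congr rfl fun z _ => ?_
      congr 1
      rw [zero_zpow d hd0, neg_zero, zero_sub, neg_zp d hneg]; ring
    · symm
      refine Fintype.sum_bijective (fun u => y * u) (mulLeft_bijective₀ y hy) _ _ fun u => ?_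
      congr 1
      rw [show -y - y * u = y * (-1-u) by ring, mul_zpow, mul_zpow]; ring
  simp_rw [e2, ← Finset.mul_sum]
  rw [Finset.sum_comm]
  simp_rw [sumψd ψ hψ d hb]
  rw [← Finset.sum_filter, Finset.sum_const, nsmul_eq_mul]
  ring

lemma w_gal {K : Type} [Field K] [Fintype K] {L : Type} [Field L] (ψ : AddChar K L) (d : ℤ)
    (σ : L →+* L) (t : K) (ht : t ≠ 0) (hσ : ∀ x, σ (ψ x) = ψ (t * x)) (k : K) (hk : k ≠ 0)
    (hkt : k ^ d = t) (a : K) : σ (wsum ψ d a) = wsum ψ d (t / k * a) := by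
  unfold wsum
  rw [map_sum]
  refine Fintype.sum_bijective (fun u => k * u) (mulLeft_bijective₀ k hk) _ _ fun u => ?_
  rw [hσ]
  congr 1
  rw [mul_zpow, hkt]; field_simp


lemma e3rel {L : Type} [Field L] (q A B C M N1 N2 N3 : L)
    (e0 : N1 + N2 + N3 = q - 1)
    (e1 : N1 * A + N2 * B + N3 * C = q)
    (e2 : N1 * A^2 + N2 * B^2 + N3 * C^2 = q^2)
    (e3 : N1 * A^3 + N2 * B^3 + N3 * C^3 = q^2 * M) :
    A * B * C * (q - 1) = q^2 * (M - (A+B+C)) + q * (A*B+B*C+C*A) := by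
  linear_combination (-A*B*C) * e0 + (A*B+B*C+C*A) * e1 - (A+B+C) * e2 + e3

lemma caseTrans (p : ℕ) (hp : p.Prime) (hp2 : p ≠ 2) (n : ℕ) (hn : 0 < n)
    {L : Type} [Field L] [CharZero L]
    (ι : L →+* ℂ) (σ : L →+* L) (A B C : L) (N1 N2 M : ℕ)
    (hfix : ∀ x : L, σ x = x → IsIntegral ℤ x → ∃ n : ℤ, x = n)
    (hγ : ∃ γ : L, IsIntegral ℤ γ ∧ (γ^2 = p ∨ γ^2 = -p) ∧ σ γ = -γ)
    (iA : IsIntegral ℤ A) (iB : IsIntegral ℤ B) (iC : IsIntegral ℤ C)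
    (rB : starRingEnd ℂ (ι B) = ι B) (rC : starRingEnd ℂ (ι C) = ι C) (hBC : B ≠ C)
    (sA : σ A = A) (sB : σ B = C) (sC : σ C = B) (h1 : 0 < N1) (h2 : 0 < N2)
    (e0 : (N1:L) + N2 + N2 = (p:L)^n - 1)
    (e1 : N1 * A + N2 * B + N2 * C = (p:L)^n)
    (e2 : N1 * A^2 + N2 * B^2 + N2 * C^2 = ((p:L)^n)^2)
    (e3 : N1 * A^3 + N2 * B^3 + N2 * C^3 = ((p:L)^n)^2 * M) : False := by
  obtain ⟨γ, iγ, hγ2, sγ⟩ := hγ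
  have e4 := e3rel _ A B C _ _ _ _ e0 e1 e2 e3
  obtain ⟨a, ha⟩ := hfix A sA iA
  obtain ⟨t, ht⟩ := hfix (B+C) (by rw [map_add, sB, sC, add_comm]) (iB.add iC)
  obtain ⟨r, hr⟩ := hfix (B*C) (by rw [map_mul, sB, sC, mul_comm]) (iB.mul iC)
  obtain ⟨k, hk⟩ := hfix (γ*(B-C)) (by rw [map_mul, map_sub, sB, sC, sγ]; ring) (iγ.mul (iB.sub iC))
  have hD : (B-C)^2 = ((t^2 - 4 * r : ℤ) : L) := by
    push_cast; rw [← ht, ← hr]; ring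
  have hDpos : 0 < t^2 - 4 * r := by
    have h5 : ι (B - C) ≠ 0 := by
      rw [Ne, map_eq_zero]; exact sub_ne_zero.2 hBC
    obtain ⟨x, hx⟩ := Complex.conj_eq_iff_real.1
      (show starRingEnd ℂ (ι (B-C)) = ι (B-C) by rw [map_sub, map_sub, rB, rC])
    have hx0 : x ≠ 0 := by rintro rfl; exact h5 (by rw [hx]; simp)
    have h6 := congrArg ι hD
    rw [map_pow, hx, map_intCast] at h6
    have h7 : x^2 = ((t^2 - 4 * r : ℤ) : ℝ) := by exact_mod_cast h6
    have : (0:ℝ) < ((t^2 - 4 * r : ℤ) : ℝ) := by rw [← h7]; positivity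
    exact_mod_cast this
  have hk2 : k^2 = p * (t^2 - 4 * r) := by
    have h5 : ((k^2 : ℤ) : L) = γ^2 * (B-C)^2 := by push_cast; rw [← hk]; ring
    rcases hγ2 with h | h
    · rw [h, hD] at h5
      exact_mod_cast h5
    · rw [h, hD] at h5
      have h6 : k^2 = -(p * (t^2 - 4 * r)) := by
        have : ((k^2 : ℤ) : L) = ((-(p * (t^2 - 4 * r)) : ℤ) : L) := by
          rw [h5]; push_cast; ring
        exact_mod_cast this
      have := hp.pos
      have : (0:ℤ) < p * (t^2 - 4*r) := by positivity
      nlinarith [sq_nonneg k]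
  subst ha
  have f0 : (N1:ℤ) + 2 * N2 = (p:ℤ)^n - 1 := by
    have : (N1:L) + 2 * N2 = (p:L)^n - 1 := by linear_combination e0
    exact_mod_cast this
  have f1 : (N1:ℤ) * a + N2 * t = (p:ℤ)^n := by
    have : (N1:L) * a + N2 * t = (p:L)^n := by rw [← ht]; linear_combination e1
    exact_mod_cast this
  have f2 : (N1:ℤ) * a^2 + N2 * (t^2 - 2 * r) = ((p:ℤ)^n)^2 := by
    have : (N1:L) * a^2 + N2 * (t^2 - 2 * r) = ((p:L)^n)^2 := by
      rw [← ht, ← hr]; linear_combination e2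
    exact_mod_cast this
  have f3 : a * r * ((p:ℤ)^n - 1) = ((p:ℤ)^n)^2 * (M - a - t) + (p:ℤ)^n * (a * t + r) := by
    have : (a:L) * r * ((p:L)^n - 1) = ((p:L)^n)^2 * (M - a - t) + (p:L)^n * (a * t + r) := by
      rw [← ht, ← hr]; linear_combination e4
    exact_mod_cast this
  by_cases h0 : a = 0
  · subst h0
    exact quadZero p hp n N2 t r k (by exact_mod_cast h2) (by linarith) (by linarith) hk2
  · exact quadMain p hp hp2 n hn a t r N1 N2 M k h0 (by exact_mod_cast h1) (by exact_mod_cast h2)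
      hDpos f0 f1 f2 f3 hk2

lemma caseCyc (p : ℕ) (hp : p.Prime) (hp2 : p ≠ 2) (n : ℕ)
    {L : Type} [Field L] [CharZero L]
    (σ : L →+* L) (A B C : L) (N : ℕ)
    (hfix : ∀ x : L, σ x = x → IsIntegral ℤ x → ∃ n : ℤ, x = n)
    (iA : IsIntegral ℤ A) (iB : IsIntegral ℤ B) (iC : IsIntegral ℤ C)
    (sS : σ (A + B + C) = A + B + C)
    (e0 : (N:L) + N + N = (p:L)^n - 1)
    (e1 : N * A + N * B + N * C = (p:L)^n) : False := by
  obtain ⟨s, hs⟩ := hfix _ sS ((iA.add iB).add iC)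
  have f0 : (N:ℤ) * 3 = (p:ℤ)^n - 1 := by
    have : (N:L) * 3 = (p:L)^n - 1 := by linear_combination e0
    exact_mod_cast this
  have f1 : (N:ℤ) * s = (p:ℤ)^n := by
    have : (N:L) * s = (p:L)^n := by rw [← hs]; linear_combination e1
    exact_mod_cast this
  have f2 : (N:ℤ) ∣ 1 := ⟨s - 3, by linarith⟩
  have f3 : N = 1 := Nat.dvd_one.1 (by exact_mod_cast f2)
  subst f3
  have f4 : p ^ n = 2 ^ 2 := by
    have : (p:ℤ)^n = 2^2 := by push_cast at f0; linarith
    exact_mod_cast this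
  have hn : n ≠ 0 := by rintro rfl; norm_num at f4
  have f5 : p ∣ 2^2 := by rw [← f4]; exact dvd_pow_self _ hn
  exact hp2 ((Nat.prime_dvd_prime_iff_eq hp Nat.prime_two).1 (hp.dvd_of_dvd_pow f5))

lemma core (p : ℕ) (hp : p.Prime) (n : ℕ) (hn : 0 < n) {K : Type} [Field K] [Fintype K]
    (hq : Fintype.card K = p^n) {L : Type} [Field L] [CharZero L]
    (ι : L →+* ℂ) (σ : L →+* L) (w : K → L)
    (hfix : ∀ x : L, σ x = x → IsIntegral ℤ x → ∃ n : ℤ, x = n)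
    (hγ : p ≠ 2 → ∃ γ : L, IsIntegral ℤ γ ∧ (γ^2 = p ∨ γ^2 = -p) ∧ σ γ = -γ)
    (hint : ∀ a, IsIntegral ℤ (w a))
    (hreal : ∀ a, starRingEnd ℂ (ι (w a)) = ι (w a))
    (w0 : w 0 = 0) (m1 : ∑ a, w a = Fintype.card K) (m2 : ∑ a, w a ^ 2 = (Fintype.card K : L)^2)
    (M : ℕ) (m3 : ∑ a, w a ^ 3 = (Fintype.card K : L)^2 * M)
    (c : K) (hc : c ≠ 0) (hσ : ∀ a, σ (w a) = w (c * a)) (hσ2 : p = 2 → c = 1)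
    (A B C : L) (hAB : A ≠ B) (hAC : A ≠ C) (hBC : B ≠ C)
    (hval : ∀ a, a ≠ 0 → w a = A ∨ w a = B ∨ w a = C)
    (hA : ∃ a, a ≠ 0 ∧ w a = A) (hB : ∃ a, a ≠ 0 ∧ w a = B) (hC : ∃ a, a ≠ 0 ∧ w a = C) :
    (∀ a, σ (w a) = w a) ∧ ∃ a, a ≠ 0 ∧ w a = 0 := by
  let N : L → ℕ := fun v => (Finset.univ.filter (fun a : K => a ≠ 0 ∧ w a = v)).card
  have hNσ : ∀ v, N (σ v) = N v := by
    intro v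
    symm
    apply Finset.card_bijective (fun a => c * a) (mulLeft_bijective₀ c hc)
    intro a
    simp only [Finset.mem_filter, Finset.mem_univ, true_and, ← hσ]
    rw [σ.injective.eq_iff]
    simp [hc]
  have hNpos : ∀ v, (∃ a, a ≠ 0 ∧ w a = v) → 0 < N v := by
    rintro v ⟨a, ha⟩
    exact Finset.card_pos.2 ⟨a, by simpa using ha⟩
  have hsum : ∀ f : L → L, ∑ a, f (w a) = f 0 + (N A * f A + N B * f B + N C * f C) := by
    intro f
    rw [← Finset.add_sum_erase _ _ (Finset.mem_univ (0:K)), w0]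
    congr 1
    have h1 : ∀ v, (N v : L) * f v = ∑ a ∈ Finset.univ.erase (0:K), if w a = v then f v else 0 := by
      intro v
      rw [← Finset.sum_filter, Finset.sum_const, nsmul_eq_mul]
      congr 2
      refine congrArg Finset.card ?_
      ext a; simp
    rw [h1, h1, h1, ← Finset.sum_add_distrib, ← Finset.sum_add_distrib]
    refine Finset.sum_congr rfl fun a ha => ?_
    rcases hval a (Finset.ne_of_mem_erase ha) with h | h | h <;> rw [h]
    · simp [hAB, hAC]
    · simp [hAB.symm, hBC]
    · simp [hAC.symm, hBC.symm]
  have hqL : (Fintype.card K : L) = (p:L)^n := by rw [hq]; push_cast; rfl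
  rw [hqL] at m1 m2 m3
  have e0 : (N A : L) + N B + N C = (p:L)^n - 1 := by
    have := hsum (fun _ => 1)
    simp only [Finset.sum_const, Finset.card_univ, nsmul_eq_mul, mul_one, hqL] at this
    linear_combination -this
  have e1 : (N A : L) * A + N B * B + N C * C = (p:L)^n := by
    rw [← m1, hsum (fun x => x)]; ring
  have e2 : (N A : L) * A^2 + N B * B^2 + N C * C^2 = ((p:L)^n)^2 := by
    rw [← m2, hsum (fun x => x^2)]; ring
  have e3 : (N A : L) * A^3 + N B * B^3 + N C * C^3 = ((p:L)^n)^2 * M := by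
    rw [← m3, hsum (fun x => x^3)]; ring
  have pA := hNpos A hA
  have pB := hNpos B hB
  have pC := hNpos C hC
  have NA := hNσ A
  have NB := hNσ B
  have NC := hNσ C
  have hcl : ∀ v, (∃ a, a ≠ 0 ∧ w a = v) → IsIntegral ℤ v ∧ starRingEnd ℂ (ι v) = ι v ∧
      (σ v = A ∨ σ v = B ∨ σ v = C) ∧ (p = 2 → σ v = v) := by
    rintro v ⟨a, ha, rfl⟩
    refine ⟨hint a, hreal a, ?_, ?_⟩
    · rw [hσ]; exact hval _ (mul_ne_zero hc ha)
    · intro h; rw [hσ, hσ2 h, one_mul]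
  obtain ⟨iA, rA, sA, tA⟩ := hcl A hA
  obtain ⟨iB, rB, sB, tB⟩ := hcl B hB
  obtain ⟨iC, rC, sC, tC⟩ := hcl C hC
  have jAB : σ A ≠ σ B := fun h => hAB (σ.injective h)
  have jAC : σ A ≠ σ C := fun h => hAC (σ.injective h)
  have jBC : σ B ≠ σ C := fun h => hBC (σ.injective h)
  have hid : σ A = A ∧ σ B = B ∧ σ C = C := by
    by_contra hne
    have hp2 : p ≠ 2 := fun h => hne ⟨tA h, tB h, tC h⟩
    rcases sA with sA | sA | sA <;> rcases sB with sB | sB | sB <;> rcases sC with sC | sC | sC <;>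
      rw [sA] at jAB jAC NA <;> rw [sB] at jAB jBC NB <;> rw [sC] at jAC jBC NC <;>
      first
      | exact absurd rfl jAB
      | exact absurd rfl jAC
      | exact absurd rfl jBC
      | exact hne ⟨sA, sB, sC⟩
      | skip
    · rw [NC] at e0 e1 e2 e3
      exact caseTrans p hp hp2 n hn ι σ A B C (N A) (N C) M hfix (hγ hp2) iA iB iC rB rC hBC sA sB sC
        pA pC (by linear_combination e0) (by linear_combination e1) (by linear_combination e2) (by linear_combination e3)
    · rw [NA] at e0 e1 e2 e3
      exact caseTrans p hp hp2 n hn ι σ C A B (N C) (N A) M hfix (hγ hp2) iC iA iB rA rB hAB sC sA sB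
        pC pA (by linear_combination e0) (by linear_combination e1) (by linear_combination e2) (by linear_combination e3)
    · rw [NB, NA] at e0 e1
      exact caseCyc p hp hp2 n σ A B C (N A) hfix iA iB iC
        (by rw [map_add, map_add, sA, sB, sC]; ring) (by linear_combination e0) (by linear_combination e1)
    · rw [NC, NA] at e0 e1
      exact caseCyc p hp hp2 n σ A B C (N A) hfix iA iB iC
        (by rw [map_add, map_add, sA, sB, sC]; ring) (by linear_combination e0) (by linear_combination e1)
    · rw [NC] at e0 e1 e2 e3
      exact caseTrans p hp hp2 n hn ι σ B A C (N B) (N C) M hfix (hγ hp2) iB iA iC rA rC hAC sB sA sC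
        pB pC (by linear_combination e0) (by linear_combination e1) (by linear_combination e2) (by linear_combination e3)
  obtain ⟨sA, sB, sC⟩ := hid
  refine ⟨?_, ?_⟩
  · intro a
    by_cases ha : a = 0
    · rw [ha, w0, map_zero]
    · rcases hval a ha with h | h | h <;> rw [h] <;> assumption
  · by_contra hno
    have nz : ∀ v, (∃ a, a ≠ 0 ∧ w a = v) → v ≠ 0 := by
      rintro v ⟨a, ha, rfl⟩ h
      exact hno ⟨a, ha, h⟩
    have zA := nz A hA
    have zB := nz B hB
    have zC := nz C hC
    have e4 := e3rel _ A B C _ _ _ _ e0 e1 e2 e3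
    obtain ⟨x, hx⟩ := hfix A sA iA
    obtain ⟨y, hy⟩ := hfix B sB iB
    obtain ⟨z, hz⟩ := hfix C sC iC
    generalize N A = n1 at *
    generalize N B = n2 at *
    generalize N C = n3 at *
    subst hx hy hz
    refine ratD p hp n hn x y z M n1 n2 n3 ?_ ?_ ?_ ?_ ?_ ?_ ?_ ?_ ?_ ?_ ?_ ?_ ?_
    · exact_mod_cast zA
    · exact_mod_cast zB
    · exact_mod_cast zC
    · exact_mod_cast hAB
    · exact_mod_cast hBC
    · exact_mod_cast hAC
    · exact_mod_cast pA
    · exact_mod_cast pB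
    · exact_mod_cast pC
    · exact_mod_cast e0
    · exact_mod_cast e1
    · exact_mod_cast e2
    · exact_mod_cast e4

lemma zmod2_eq_one : ∀ x : ZMod 2, x ≠ 0 → x = 1 := by decide

lemma canon_eq (p : ℕ) [Fact p.Prime] (K : Type) [Field K] [Fintype K] [Algebra (ZMod p) K]
    {L : Type} [Field L] (ι : L →+* ℂ) (z : L) (hιz : ι z = Complex.exp (2 * Real.pi * Complex.I / p))
    (x : K) : canonicalAddChar p K x = ι (z ^ (Algebra.trace (ZMod p) K x).val) := by
  rw [map_pow, hιz, ← Complex.exp_nat_mul]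
  unfold canonicalAddChar
  congr 1; ring

lemma exists_psi (p : ℕ) [Fact p.Prime] (K : Type) [Field K] [Fintype K] [Algebra (ZMod p) K]
    {L : Type} [Field L] (z : L) (hz : IsPrimitiveRoot z p) :
    ∃ ψ : AddChar K L, ψ.IsPrimitive ∧ (∀ x, ψ x = z ^ (Algebra.trace (ZMod p) K x).val) ∧
      ∀ (j : ZMod p) (x : K), ψ (algebraMap (ZMod p) K j * x) = ψ x ^ j.val := by
  have hp : p.Prime := Fact.out
  let χ : AddChar (ZMod p) L := AddChar.zmodChar p hz.pow_eq_one
  have hχ : ∀ x, χ x = z ^ x.val := fun x => AddChar.zmodChar_apply _ _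
  refine ⟨χ.compAddMonoidHom (Algebra.trace (ZMod p) K).toAddMonoidHom, ?_, fun x => hχ _, ?_⟩
  · apply AddChar.IsPrimitive.of_ne_one
    intro h
    obtain ⟨x, hx⟩ := Algebra.trace_surjective (ZMod p) K 1
    have h1 := DFunLike.congr_fun h x
    have h2 : χ (Algebra.trace (ZMod p) K x) = 1 := h1
    have : Fact (1 < p) := ⟨hp.one_lt⟩
    rw [hx, hχ, ZMod.val_one, pow_one] at h2
    exact hz.ne_one hp.one_lt h2
  · intro j x
    show χ (Algebra.trace (ZMod p) K _) = χ (Algebra.trace (ZMod p) K _) ^ _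
    rw [← Algebra.smul_def, map_smul, ← AddChar.mulShift_spec', ZMod.natCast_zmod_val]
    rfl

theorem stmt1 (p : ℕ) [Fact p.Prime] (K : Type) [Field K] [Fintype K] [CharP K p]
    [Algebra (ZMod p) K]
    (d : ℤ) (hd : Int.gcd d ((Fintype.card K : ℤ) - 1) = 1)
    (h3 : (weilValues p K d).ncard = 3) :
    d ≡ 1 [ZMOD (p : ℤ) - 1] ∧
    (∀ a : K, a ≠ 0 → ∃ n : ℤ, weilSum p K d a = (n : ℂ)) ∧
    (∃ a : K, a ≠ 0 ∧ weilSum p K d a = 0) := by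
  have hp : p.Prime := Fact.out
  obtain ⟨L, _, _, _⟩ := cyc_inst p
  obtain ⟨ι, z, σ', j, hιz, hz, hj, hσz', hfix'⟩ := gal p L
  obtain ⟨σ, hσ'⟩ : ∃ σ : L →+* L, ∀ x, σ x = σ' x := ⟨σ'.toRingEquiv.toRingHom, fun _ => rfl⟩
  have hσz : σ z = z ^ j.val.val := by rw [hσ', hσz']
  have hfix : ∀ x : L, σ x = x → IsIntegral ℤ x → ∃ n : ℤ, x = n := by
    intro x hx; rw [hσ'] at hx; exact hfix' x hx
  obtain ⟨ψ, hψ, hψv, hψj⟩ := exists_psi p K z hz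
  have hW : ∀ a, weilSum p K d a = ι (wsum ψ d a) := by
    intro a
    unfold weilSum wsum
    rw [map_sum]
    refine Finset.sum_congr rfl fun x _ => ?_
    rw [hψv]; exact canon_eq p K ι z hιz _
  obtain ⟨n, hpp, hq⟩ := FiniteField.card K p
  -- three values
  obtain ⟨A', B', C', hAB', hAC', hBC', hset⟩ := Set.ncard_eq_three.1 h3
  have hpull : ∀ v ∈ weilValues p K d, ∃ u : L, ι u = v ∧ ∃ a, a ≠ 0 ∧ wsum ψ d a = u := by
    rintro v ⟨a, ha, rfl⟩
    exact ⟨_, (hW a).symm, a, ha, rfl⟩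
  obtain ⟨A, rfl, hA⟩ := hpull A' (by rw [hset]; simp)
  obtain ⟨B, rfl, hB⟩ := hpull B' (by rw [hset]; simp)
  obtain ⟨C, rfl, hC⟩ := hpull C' (by rw [hset]; simp)
  have hAB : A ≠ B := fun h => hAB' (by rw [h])
  have hAC : A ≠ C := fun h => hAC' (by rw [h])
  have hBC : B ≠ C := fun h => hBC' (by rw [h])
  have hval : ∀ a, a ≠ 0 → wsum ψ d a = A ∨ wsum ψ d a = B ∨ wsum ψ d a = C := by
    intro a ha
    have : weilSum p K d a ∈ weilValues p K d := ⟨a, ha, rfl⟩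
    rw [hset, hW] at this
    simp only [Set.mem_insert_iff, Set.mem_singleton_iff, ι.injective.eq_iff] at this
    exact this
  have hd0 : d ≠ 0 := by
    rintro rfl
    have hc : Fintype.card K = 2 := by
      have := Fintype.card_pos (α := K)
      rw [Int.gcd_zero_left] at hd
      omega
    obtain ⟨a, ha, hA⟩ := hA
    obtain ⟨b, hb, hB⟩ := hB
    have hab : a ≠ b := fun h => hAB (by rw [← hA, ← hB, h])
    have h5 : ({0, a, b} : Finset K).card = 3 := by
      rw [Finset.card_eq_three]; exact ⟨0, a, b, ha.symm, hb.symm, hab, rfl⟩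
    have := Finset.card_le_univ ({0, a, b} : Finset K)
    omega
  have hb := zpow_bij (K := K) d hd0 hd
  have hneg : (-1 : K) ^ d = -1 := by
    rcases Int.even_or_odd d with he | ho
    · have h2 : ¬ (2:ℤ) ∣ (Fintype.card K : ℤ) - 1 := by
        intro h
        have := Int.dvd_coe_gcd he.two_dvd h
        rw [hd] at this
        norm_num at this
      have h4 : 2 ∣ Fintype.card K := by omega
      rw [hq] at h4
      have h5 : 2 = p := (Nat.prime_dvd_prime_iff_eq Nat.prime_two hp).1 (Nat.prime_two.dvd_of_dvd_pow h4)
      subst h5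
      have : (-1 : K) = 1 := by
        have := CharTwo.neg_eq (1 : K); exact this
      rw [this, one_zpow]
    · exact ho.neg_one_zpow
  obtain ⟨k, hk⟩ := hb.2 (algebraMap (ZMod p) K j)
  simp only at hk
  set t := algebraMap (ZMod p) K j with ht
  have ht0 : t ≠ 0 := by
    rw [ht, Ne, map_eq_zero]; exact j.ne_zero
  have hk0 : k ≠ 0 := by
    rintro rfl
    rw [zero_zpow d hd0] at hk; exact ht0 hk.symm
  have hσψ : ∀ x, σ (ψ x) = ψ (t * x) := by
    intro x
    rw [hψj, hψv, map_pow, hσz, ← pow_mul, ← pow_mul, mul_comm]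
  have hgal : ∀ a, σ (wsum ψ d a) = wsum ψ d (t / k * a) :=
    fun a => w_gal ψ d σ t ht0 hσψ k hk0 hk a
  have hint : ∀ a, IsIntegral ℤ (wsum ψ d a) := by
    intro a
    refine IsIntegral.sum _ fun x _ => ?_
    rw [hψv]
    exact (hz.isIntegral hp.pos).pow _
  have hconj : ∀ x, starRingEnd ℂ (ι (ψ x)) = ι (ψ (-x)) := by
    intro x
    have h1 : ι (ψ x) * ι (ψ (-x)) = 1 := by
      rw [← map_mul, ← AddChar.map_add_eq_mul, add_neg_cancel, AddChar.map_zero_eq_one, map_one]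
    have h2 : ι (ψ x) ^ p = 1 := by
      rw [← map_pow, hψv, ← pow_mul, mul_comm, pow_mul, hz.pow_eq_one, one_pow, map_one]
    have h3 : ‖ι (ψ x)‖ = 1 := Complex.norm_eq_one_of_pow_eq_one h2 hp.ne_zero
    rw [← Complex.inv_eq_conj h3]
    exact inv_eq_of_mul_eq_one_right h1
  have hreal : ∀ a, starRingEnd ℂ (ι (wsum ψ d a)) = ι (wsum ψ d a) := by
    intro a
    unfold wsum
    rw [map_sum, map_sum]
    refine Fintype.sum_bijective (fun x => -x) (Equiv.neg K).bijective _ _ fun x => ?_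
    rw [hconj, neg_zp d hneg]
    congr 2; ring
  have m2' := mom2 ψ hψ d hb hneg
  have m2 : ∑ a, wsum ψ d a ^ 2 = (Fintype.card K : L)^2 := by
    have := m2' 1
    rw [if_pos rfl] at this
    rw [← this]
    refine Finset.sum_congr rfl fun a _ => ?_
    rw [one_mul, sq]
  obtain ⟨M, m3⟩ := mom3 ψ hψ d hb hneg hd0
  have hc2 : p = 2 → t / k = 1 := by
    intro h2
    have hj1 : (j : ZMod p) = 1 := by
      subst h2
      exact zmod2_eq_one _ j.ne_zero
    have ht1 : t = 1 := by rw [ht, hj1, map_one]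
    have hk1 : k = 1 := hb.1 (by simp only [one_zpow]; rw [hk, ht1])
    rw [ht1, hk1, div_one]
  obtain ⟨hall, a0, ha0, hz0⟩ := core p hp n n.pos hq ι σ (wsum ψ d) hfix
    (fun h => gaussL p h z hz σ j hj hσz) hint hreal
    (w_zero ψ hψ d hb) (mom1 ψ hψ d hd0) m2 M m3 (t / k) (div_ne_zero ht0 hk0) hgal hc2
    A B C hAB hAC hBC hval hA hB hC
  refine ⟨?_, ?_, a0, ha0, by rw [hW, hz0, map_zero]⟩
  · have h1 := m2' (t / k)
    have h2 : ∑ a, wsum ψ d a * wsum ψ d (t / k * a) = (Fintype.card K : L)^2 := by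
      rw [← m2]
      refine Finset.sum_congr rfl fun a _ => ?_
      rw [← hgal, hall, sq]
    rw [h2] at h1
    have hc1 : t / k = 1 := by
      by_contra h
      rw [if_neg h] at h1
      have : (Fintype.card K : L) ≠ 0 := Nat.cast_ne_zero.2 Fintype.card_ne_zero
      exact this (pow_eq_zero_iff (two_ne_zero) |>.1 h1)
    have hkt : t = k := by
      rwa [div_eq_one_iff_eq hk0] at hc1
    rw [← hkt, ht, ← map_zpow₀] at hk
    have h4 := (algebraMap (ZMod p) K).injective hk
    have h5 : j ^ d = j := by
      ext; rw [Units.val_zpow_eq_zpow_val, h4]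
    have h6 : j ^ (d - 1) = 1 := by rw [zpow_sub, h5, zpow_one, mul_inv_cancel]
    have h7 := orderOf_dvd_iff_zpow_eq_one.2 h6
    rw [orderOf_eq_card_of_forall_mem_zpowers hj, Nat.card_eq_fintype_card, ZMod.card_units] at h7
    have h8 : ((p - 1 : ℕ) : ℤ) = (p : ℤ) - 1 := by have := hp.pos; omega
    rw [h8] at h7
    exact (Int.modEq_iff_dvd.2 h7).symm
  · intro a ha
    obtain ⟨m, hm⟩ := hfix _ (hall a) (hint a)
    exact ⟨m, by rw [hW, hm, map_intCast]⟩
end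

section
/- Let K be a finite field of characteristic p, let d be an integer with gcd(d, |K| − 1) = 1, and suppose I ⊆ J ⊆ K are subfields of K with [J : I] = 2 such that d is degenerate over I but nondegenerate over J. Then there is no complex number A such that {W_{K,d}(a) : a ∈ K^×} = {−A, 0, A}. -/
open scoped BigOperators Classical

section DH
set_option linter.unusedSectionVars false
open Polynomial

variable {J : Type} [Field J] [Fintype J]

theorem finite_monicDeg (n : ℕ) : {f : J[X] | f.Monic ∧ f.natDegree = n}.Finite := by
  apply Set.Finite.subset (Set.finite_range
    (fun c : Fin (n+1) → J => ∑ i : Fin (n+1), C (c i) * X ^ (i : ℕ)))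
  rintro f ⟨-, hf⟩
  refine ⟨fun i => f.coeff i, ?_⟩
  simp only
  rw [Fin.sum_univ_eq_sum_range (fun i => C (f.coeff i) * X ^ i) (n+1), ← hf]
  exact (f.as_sum_range_C_mul_X_pow).symm

/-- monic polynomials of degree `n` -/
noncomputable def monicDeg (J : Type) [Field J] [Fintype J] (n : ℕ) : Finset J[X] :=
  (finite_monicDeg (J := J) n).toFinset

theorem mem_monicDeg {n : ℕ} {f : J[X]} : f ∈ monicDeg J n ↔ f.Monic ∧ f.natDegree = n := by
  simp [monicDeg]

/-- monic irreducible polynomials of degree at most `n` -/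
noncomputable def irrLE (J : Type) [Field J] [Fintype J] (N : ℕ) : Finset J[X] :=
  ((Finset.range (N+1)).biUnion (monicDeg J)).filter Irreducible

theorem mem_irrLE {n : ℕ} {f : J[X]} :
    f ∈ irrLE J n ↔ f.Monic ∧ f.natDegree ≤ n ∧ Irreducible f := by
  simp [irrLE, mem_monicDeg, Nat.lt_succ_iff]
  tauto

/-- the multiplicative function of the Davenport-Hasse argument -/
noncomputable def lam (χ : MulChar J ℂ) (ψ : AddChar J ℂ) (f : J[X]) : ℂ :=
  χ ((-1) ^ f.natDegree * f.coeff 0) * ψ (-f.nextCoeff)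

theorem lam_mul (χ : MulChar J ℂ) (ψ : AddChar J ℂ) {f g : J[X]} (hf : f.Monic) (hg : g.Monic) :
    lam χ ψ (f * g) = lam χ ψ f * lam χ ψ g := by
  simp only [lam]
  rw [hf.natDegree_mul hg, mul_coeff_zero, hf.nextCoeff_mul hg, neg_add, ψ.map_add_eq_mul,
    pow_add, show ((-1:J) ^ f.natDegree * (-1) ^ g.natDegree * (f.coeff 0 * g.coeff 0)) =
    ((-1) ^ f.natDegree * f.coeff 0) * ((-1) ^ g.natDegree * g.coeff 0) by ring, map_mul]
  ring

theorem lam_one (χ : MulChar J ℂ) (ψ : AddChar J ℂ) : lam χ ψ 1 = 1 := by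
  simp [lam, nextCoeff]

theorem lam_pow (χ : MulChar J ℂ) (ψ : AddChar J ℂ) {f : J[X]} (hf : f.Monic) (k : ℕ) :
    lam χ ψ (f ^ k) = lam χ ψ f ^ k := by
  induction k with
  | zero => simp [lam_one]
  | succ k ih => rw [pow_succ, lam_mul χ ψ (hf.pow k) hf, ih, pow_succ]

/-- sums over monic polynomials -/
noncomputable def Ssum (χ : MulChar J ℂ) (ψ : AddChar J ℂ) (n : ℕ) : ℂ :=
  ∑ f ∈ monicDeg J n, lam χ ψ f

theorem Ssum_zero (χ : MulChar J ℂ) (ψ : AddChar J ℂ) : Ssum χ ψ 0 = 1 := by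
  have : monicDeg J 0 = {1} := by
    ext f
    rw [mem_monicDeg, Finset.mem_singleton]
    constructor
    · rintro ⟨h1, h2⟩
      exact h1.natDegree_eq_zero.mp h2
    · rintro rfl
      simp
  rw [Ssum, this, Finset.sum_singleton, lam_one]

theorem Ssum_one (χ : MulChar J ℂ) (ψ : AddChar J ℂ) : Ssum χ ψ 1 = gaussSum χ ψ := by
  rw [gaussSum, Ssum]
  symm
  apply Finset.sum_bij (fun (b : J) _ => X - C b)
  · intro b _
    rw [mem_monicDeg]
    exact ⟨monic_X_sub_C b, natDegree_X_sub_C b⟩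
  · intro a _ b _ h
    simpa using h
  · intro f hf
    rw [mem_monicDeg] at hf
    refine ⟨-f.coeff 0, Finset.mem_univ _, ?_⟩
    rw [map_neg, sub_neg_eq_add]
    exact (hf.1.eq_X_add_C hf.2).symm
  · intro b _
    simp [lam, nextCoeff]

theorem Ssum_ge_two (χ : MulChar J ℂ) (ψ : AddChar J ℂ) (hψ : ψ ≠ 1) (n : ℕ) (hn : 2 ≤ n) :
    Ssum χ ψ n = 0 := by
  obtain ⟨b, hb⟩ := AddChar.ne_one_iff.mp hψ
  have key : Ssum χ ψ n = Ssum χ ψ n * ψ b := by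
    rw [Ssum, Finset.sum_mul]
    symm
    have hd : ∀ (f : J[X]) (c : J), f ∈ monicDeg J n →
        (f + C c * X ^ (n-1)) ∈ monicDeg J n := by
      intro f c hf
      rw [mem_monicDeg] at hf ⊢
      have h1 : (C c * X ^ (n-1)).degree < f.degree := by
        rw [degree_eq_natDegree hf.1.ne_zero, hf.2]
        refine lt_of_le_of_lt (degree_C_mul_X_pow_le _ _) ?_
        exact_mod_cast (by omega : n - 1 < n)
      exact ⟨hf.1.add_of_left h1, by rw [natDegree_add_eq_left_of_degree_lt h1, hf.2]⟩
    refine Finset.sum_bij' (fun f _ => f + C (-b) * X ^ (n-1)) (fun f _ => f + C b * X ^ (n-1))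
      (fun f hf => hd f _ hf) (fun f hf => hd f _ hf) (fun f hf => by simp)
      (fun f hf => by simp) ?_
    · intro f hf
      have h2 := hd f (-b) hf
      rw [mem_monicDeg] at h2 hf
      simp only [lam]
      have e1 : (f + C (-b) * X ^ (n-1)).nextCoeff = f.nextCoeff - b := by
        rw [nextCoeff_of_natDegree_pos (by omega), nextCoeff_of_natDegree_pos (by omega), h2.2,
          hf.2]
        simp [sub_eq_add_neg]
      have e2 : (f + C (-b) * X ^ (n-1)).coeff 0 = f.coeff 0 := by
        rw [coeff_add, coeff_C_mul_X_pow, if_neg (by omega), add_zero]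
      rw [e1, e2, h2.2, hf.2, neg_sub, sub_eq_neg_add, ψ.map_add_eq_mul]
      ring
  have : Ssum χ ψ n * (1 - ψ b) = 0 := by rw [mul_sub, mul_one, ← key, sub_self]
  rcases mul_eq_zero.mp this with h | h
  · exact h
  · exact absurd (sub_eq_zero.mp h).symm hb

theorem degree_identity (N : ℕ) (f : J[X]) (hf : f.Monic) (hN : f.natDegree ≤ N) :
    f.natDegree = ∑ P ∈ irrLE J N, ∑ k ∈ Finset.Icc 1 N, if P ^ k ∣ f then P.natDegree else 0 := by
  have hf0 := hf.ne_zero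
  set s := UniqueFactorizationMonoid.normalizedFactors f with hs
  have hprod : s.prod = f := by
    have := UniqueFactorizationMonoid.prod_normalizedFactors_eq hf0
    rw [← hs, hf.normalize_eq_self] at this
    exact this
  have hmon : ∀ P ∈ s, P.Monic := by
    intro P hP
    have h1 := UniqueFactorizationMonoid.normalize_normalized_factor P hP
    rw [← h1]
    exact monic_normalize (UniqueFactorizationMonoid.irreducible_of_normalized_factor P hP).ne_zero
  have hsub : s.toFinset ⊆ irrLE J N := by
    intro P hP
    rw [Multiset.mem_toFinset] at hP
    rw [mem_irrLE]
    refine ⟨hmon P hP, ?_, UniqueFactorizationMonoid.irreducible_of_normalized_factor P hP⟩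
    exact (natDegree_le_of_dvd (UniqueFactorizationMonoid.dvd_of_mem_normalizedFactors hP) hf0).trans hN
  have h1 : f.natDegree = (s.map natDegree).sum := by
    conv_lhs => rw [← hprod]
    exact natDegree_multiset_prod_of_monic _ hmon
  rw [h1, Finset.sum_multiset_map_count]
  rw [Finset.sum_subset hsub]
  swap
  · intro P _ hP
    rw [Multiset.mem_toFinset] at hP
    rw [Multiset.count_eq_zero_of_notMem hP, zero_smul]
  apply Finset.sum_congr rfl
  intro P hP
  rw [mem_irrLE] at hP
  rw [← Finset.sum_filter, Finset.sum_const]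
  congr 1
  have hk : ∀ k, P ^ k ∣ f ↔ k ≤ s.count P := by
    intro k
    rw [pow_dvd_iff_le_emultiplicity,
      UniqueFactorizationMonoid.emultiplicity_eq_count_normalizedFactors hP.2.2 hf0,
      hP.1.normalize_eq_self, ← hs]
    exact_mod_cast Iff.rfl
  have hle : s.count P ≤ N := by
    have h2 : P ^ (s.count P) ∣ f := (hk _).mpr le_rfl
    have h3 := natDegree_le_of_dvd h2 hf0
    rw [natDegree_pow] at h3
    have h4 := hP.2.2.natDegree_pos
    nlinarith
  have : (Finset.Icc 1 N).filter (fun k => P ^ k ∣ f) = Finset.Icc 1 (s.count P) := by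
    ext k
    simp only [Finset.mem_filter, Finset.mem_Icc, hk]
    omega
  rw [this, Nat.card_Icc]
  omega

theorem sum_dvd (χ : MulChar J ℂ) (ψ : AddChar J ℂ) (n : ℕ) (Q : J[X]) (hQ : Q.Monic) :
    ∑ f ∈ monicDeg J n, (if Q ∣ f then lam χ ψ f else 0) =
      if Q.natDegree ≤ n then lam χ ψ Q * Ssum χ ψ (n - Q.natDegree) else 0 := by
  split_ifs with h
  · rw [Ssum, Finset.mul_sum, ← Finset.sum_filter]
    symm
    apply Finset.sum_bij (fun g _ => Q * g)
    · intro g hg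
      rw [mem_monicDeg] at hg
      rw [Finset.mem_filter, mem_monicDeg]
      refine ⟨⟨hQ.mul hg.1, ?_⟩, dvd_mul_right _ _⟩
      rw [hQ.natDegree_mul hg.1, hg.2]; omega
    · intro a _ b _ hab
      exact mul_left_cancel₀ hQ.ne_zero hab
    · intro f hf
      rw [Finset.mem_filter, mem_monicDeg] at hf
      obtain ⟨⟨h1, h2⟩, g, rfl⟩ := hf
      have hg : g.Monic := hQ.of_mul_monic_left h1
      refine ⟨g, ?_, rfl⟩
      rw [mem_monicDeg]
      rw [hQ.natDegree_mul hg] at h2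
      exact ⟨hg, by omega⟩
    · intro g hg
      rw [mem_monicDeg] at hg
      rw [lam_mul χ ψ hQ hg.1]
  · apply Finset.sum_eq_zero
    intro f hf
    rw [mem_monicDeg] at hf
    rw [if_neg]
    intro hd
    exact h (hf.2 ▸ natDegree_le_of_dvd hd hf.1.ne_zero)

/-- von Mangoldt type sums -/
noncomputable def Lsum (χ : MulChar J ℂ) (ψ : AddChar J ℂ) (N n : ℕ) : ℂ :=
  ∑ P ∈ irrLE J N, ∑ k ∈ Finset.Icc 1 N,
    if k * P.natDegree = n then (P.natDegree : ℂ) * lam χ ψ P ^ k else 0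

theorem newton (χ : MulChar J ℂ) (ψ : AddChar J ℂ) (hψ : ψ ≠ 1) (N n : ℕ) (hn : n ≤ N) (h1 : 1 ≤ n) :
    (n : ℂ) * Ssum χ ψ n = Lsum χ ψ N n + gaussSum χ ψ * Lsum χ ψ N (n - 1) := by
  have e1 : (n : ℂ) * Ssum χ ψ n = ∑ P ∈ irrLE J N, ∑ k ∈ Finset.Icc 1 N,
      ∑ f ∈ monicDeg J n, (P.natDegree : ℂ) * (if P ^ k ∣ f then lam χ ψ f else 0) := by
    rw [Ssum, Finset.mul_sum]
    have : ∀ f ∈ monicDeg J n, (n : ℂ) * lam χ ψ f = ∑ P ∈ irrLE J N, ∑ k ∈ Finset.Icc 1 N,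
        (P.natDegree : ℂ) * (if P ^ k ∣ f then lam χ ψ f else 0) := by
      intro f hf
      rw [mem_monicDeg] at hf
      have := degree_identity N f hf.1 (by omega)
      rw [hf.2] at this
      conv_lhs => rw [this]
      push_cast
      rw [Finset.sum_mul]
      apply Finset.sum_congr rfl; intro P _
      rw [Finset.sum_mul]
      apply Finset.sum_congr rfl; intro k _
      split_ifs <;> simp
    rw [Finset.sum_congr rfl this, Finset.sum_comm]
    apply Finset.sum_congr rfl; intro P _
    rw [Finset.sum_comm]
  rw [e1, Lsum, Lsum, Finset.mul_sum, ← Finset.sum_add_distrib]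
  apply Finset.sum_congr rfl; intro P hP
  rw [mem_irrLE] at hP
  rw [Finset.mul_sum, ← Finset.sum_add_distrib]
  apply Finset.sum_congr rfl; intro k hk
  rw [Finset.mem_Icc] at hk
  rw [← Finset.mul_sum, sum_dvd χ ψ n _ (hP.1.pow k), natDegree_pow, lam_pow χ ψ hP.1]
  have hpos : 1 ≤ k * P.natDegree := Nat.mul_pos hk.1 hP.2.2.natDegree_pos
  by_cases c1 : k * P.natDegree = n
  · rw [if_pos (by omega), if_pos c1, if_neg (by omega), c1, Nat.sub_self, Ssum_zero]; ring
  · by_cases c2 : k * P.natDegree = n - 1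
    · rw [if_pos (by omega), if_neg c1, if_pos c2, c2, show n - (n-1) = 1 by omega, Ssum_one]; ring
    · rw [if_neg c1, if_neg c2]
      split_ifs with c3
      · rw [Ssum_ge_two χ ψ hψ _ (by omega)]; ring
      · ring

theorem Lsum_eq (χ : MulChar J ℂ) (ψ : AddChar J ℂ) (hψ : ψ ≠ 1) (N n : ℕ) (hn : n + 1 ≤ N) :
    Lsum χ ψ N (n+1) = (-1) ^ n * gaussSum χ ψ ^ (n+1) := by
  induction n with
  | zero =>
    have := newton χ ψ hψ N 1 hn le_rfl
    have h0 : Lsum χ ψ N 0 = 0 := by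
      rw [Lsum]
      apply Finset.sum_eq_zero; intro P hP
      apply Finset.sum_eq_zero; intro k hk
      rw [mem_irrLE] at hP
      rw [Finset.mem_Icc] at hk
      have hpos : 1 ≤ k * P.natDegree := Nat.mul_pos hk.1 hP.2.2.natDegree_pos
      rw [if_neg (by omega)]
    rw [Ssum_one, Nat.sub_self, h0] at this
    simp at this ⊢
    exact this.symm
  | succ n ih =>
    have := newton χ ψ hψ N (n+1+1) hn (by omega)
    rw [Ssum_ge_two χ ψ hψ _ (by omega), Nat.add_sub_cancel, ih (by omega)] at this
    linear_combination -this

theorem card_minpoly (K : Type) [Field K] [Fintype K] [Algebra J K] (P : J[X]) (hP : P.Monic)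
    (hi : Irreducible P) (hd : P.natDegree ∣ Module.finrank J K) :
    (Finset.univ.filter (fun x : K => minpoly J x = P)).card = P.natDegree := by
  have hdv := hi.natDegree_dvd_iff_dvd_X_pow_card_pow_sub_X.mp hd
  have hc : Nat.card J ^ Module.finrank J K = Fintype.card K := by
    rw [← Nat.card_eq_fintype_card, Module.natCard_eq_pow_finrank (K := J) (V := K)]
  rw [hc] at hdv
  have hsp : (P.map (algebraMap J K)).Splits := by
    refine Splits.of_dvd ?_ ?_ (map_dvd (algebraMap J K) hdv)
    · rw [splits_iff_card_roots]
      simp only [Polynomial.map_sub, Polynomial.map_pow, map_X]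
      rw [FiniteField.roots_X_pow_card_sub_X,
        FiniteField.X_pow_card_sub_X_natDegree_eq _ Fintype.one_lt_card]
      simp
    · simp only [Polynomial.map_sub, Polynomial.map_pow, map_X]
      exact FiniteField.X_pow_card_sub_X_ne_zero _ Fintype.one_lt_card
  have := card_rootSet_eq_natDegree (PerfectField.separable_of_irreducible hi) hsp
  rw [← this, ← Set.toFinset_card]
  congr 1
  ext x
  simp only [Finset.mem_filter, Finset.mem_univ, true_and, Set.mem_toFinset]
  rw [mem_rootSet_of_ne hi.ne_zero]
  constructor
  · rintro rfl; exact minpoly.aeval _ _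
  · intro h; exact (minpoly.eq_of_irreducible_of_monic hi h hP).symm

theorem davenport_hasse (K : Type) [Field K] [Fintype K] [Algebra J K]
    (χ : MulChar J ℂ) (ψ : AddChar J ℂ) (hψ : ψ ≠ 1) (n : ℕ) (hn : Module.finrank J K = n + 1) :
    ∑ x : K, χ (Algebra.norm J x) * ψ (Algebra.trace J K x) =
      (-1) ^ n * gaussSum χ ψ ^ (n+1) := by
  rw [← Lsum_eq χ ψ hψ (n+1) n le_rfl, Lsum]
  have hterm : ∀ x : K, ∃ k, k * (minpoly J x).natDegree = n + 1 ∧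
      χ (Algebra.norm J x) * ψ (Algebra.trace J K x) = lam χ ψ (minpoly J x) ^ k := by
    intro x
    have hx : IsIntegral J x := Algebra.IsIntegral.isIntegral x
    refine ⟨Module.finrank (IntermediateField.adjoin J {x}) K, ?_, ?_⟩
    · rw [← IntermediateField.adjoin.finrank hx, mul_comm, Module.finrank_mul_finrank, hn]
    · rw [trace_eq_finrank_mul_minpoly_nextCoeff, Algebra.norm_eq_norm_adjoin]
      rw [show (IntermediateField.AdjoinSimple.gen J x) = (IntermediateField.adjoin.powerBasis hx).gen from rfl,
        Algebra.PowerBasis.norm_gen_eq_coeff_zero_minpoly]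
      rw [← (IntermediateField.adjoin.powerBasis hx).natDegree_minpoly]
      rw [show minpoly J (IntermediateField.adjoin.powerBasis hx).gen = minpoly J x from
        IntermediateField.minpoly_gen J x]
      simp only [lam, mul_pow]
      rw [← mul_pow, ← nsmul_eq_mul, ψ.map_nsmul_eq_pow, map_pow]
  have hmaps : ∀ x ∈ (Finset.univ : Finset K), minpoly J x ∈ irrLE J (n+1) := by
    intro x _
    have hx : IsIntegral J x := Algebra.IsIntegral.isIntegral x
    rw [mem_irrLE]
    refine ⟨minpoly.monic hx, ?_, minpoly.irreducible hx⟩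
    obtain ⟨k, hk, -⟩ := hterm x
    exact Nat.le_of_dvd (by omega) (Dvd.intro_left k hk)
  rw [← Finset.sum_fiberwise_of_maps_to hmaps]
  apply Finset.sum_congr rfl
  intro P hP
  rw [mem_irrLE] at hP
  have hpos := hP.2.2.natDegree_pos
  by_cases hd : P.natDegree ∣ n + 1
  · obtain ⟨k, hk⟩ := hd
    have hk1 : 1 ≤ k := by
      rcases Nat.eq_zero_or_pos k with rfl | h
      · simp at hk
      · exact h
    have hcan : ∀ k', k' * P.natDegree = n + 1 → k' = k := by
      intro k' h
      rw [hk, mul_comm P.natDegree] at h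
      exact Nat.eq_of_mul_eq_mul_right hpos h
    rw [Finset.sum_eq_single_of_mem k]
    rotate_left
    · rw [Finset.mem_Icc]
      exact ⟨hk1, by nlinarith⟩
    · intro k' _ hne
      rw [if_neg]
      intro h
      exact hne (hcan k' h)
    rw [if_pos (by rw [hk, mul_comm])]
    have : ∀ x ∈ Finset.univ.filter (fun x : K => minpoly J x = P),
        χ (Algebra.norm J x) * ψ (Algebra.trace J K x) = lam χ ψ P ^ k := by
      intro x hx
      rw [Finset.mem_filter] at hx
      obtain ⟨k', h1, h2⟩ := hterm x
      rw [hx.2] at h1 h2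
      rw [h2, hcan k' h1]
    rw [Finset.sum_congr rfl this, Finset.sum_const, nsmul_eq_mul,
      card_minpoly K P hP.1 hP.2.2 (by rw [hn, hk]; exact dvd_mul_right _ _)]
  · rw [Finset.sum_eq_zero, Finset.sum_eq_zero]
    · intro k _
      rw [if_neg]
      intro h
      exact hd (Dvd.intro_left k h)
    · intro x hx
      rw [Finset.mem_filter] at hx
      obtain ⟨k', h1, h2⟩ := hterm x
      rw [hx.2] at h1
      exact absurd (Dvd.intro_left k' h1) hd
end DH

section WW
set_option linter.unusedSectionVars false
variable {F : Type} [Field F] [Fintype F]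

/-- Weil sum with natural exponent and arbitrary additive character -/
noncomputable def WW (ψ : AddChar F ℂ) (e : ℕ) (a : F) : ℂ := ∑ x : F, ψ (x ^ e + a * x)

theorem sum_mulShift' (ψ : AddChar F ℂ) (hψ : ψ ≠ 1) (b : F) :
    ∑ a : F, ψ (a * b) = if b = 0 then (Fintype.card F : ℂ) else 0 := by
  have := AddChar.sum_mulShift b (AddChar.IsPrimitive.of_ne_one hψ)
  rw [this]; split_ifs <;> simp

theorem pow_bij (e e' : ℕ) (H : ∀ x : F, (x ^ e) ^ e' = x) :
    Function.Bijective (fun x : F => x ^ e) := by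
  apply Function.Injective.bijective_of_finite
  intro x y h
  simp only at h
  rw [← H x, h, H y]

theorem WW_sum (ψ : AddChar F ℂ) (hψ : ψ ≠ 1) (e : ℕ) (he : e ≠ 0) :
    ∑ a : F, WW ψ e a = Fintype.card F := by
  simp only [WW]
  rw [Finset.sum_comm]
  have : ∀ x : F, ∑ a : F, ψ (x ^ e + a * x) = if x = 0 then (Fintype.card F : ℂ) else 0 := by
    intro x
    simp_rw [ψ.map_add_eq_mul]
    rw [← Finset.mul_sum, sum_mulShift' ψ hψ]
    split_ifs with h
    · simp [h, he]
    · simp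
  simp [this]

theorem WW_zero (ψ : AddChar F ℂ) (hψ : ψ ≠ 1) (e e' : ℕ) (H : ∀ x : F, (x ^ e) ^ e' = x) :
    WW ψ e 0 = 0 := by
  simp only [WW, zero_mul, add_zero]
  rw [← AddChar.sum_eq_zero_of_ne_one hψ]
  exact Fintype.sum_bijective _ (pow_bij e e' H) _ _ (fun x => rfl)

theorem conj_addChar (ψ : AddChar F ℂ) (x : F) : (starRingEnd ℂ) (ψ x) = ψ (-x) := by
  rw [AddChar.map_neg_eq_conj]

theorem WW_sq (ψ : AddChar F ℂ) (hψ : ψ ≠ 1) (e : ℕ) :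
    ∑ a : F, WW ψ e a * (starRingEnd ℂ) (WW ψ e a) = (Fintype.card F : ℂ) ^ 2 := by
  have h1 : ∀ a : F, WW ψ e a * (starRingEnd ℂ) (WW ψ e a) =
      ∑ x : F, ∑ y : F, ψ (x ^ e - y ^ e) * ψ (a * (x - y)) := by
    intro a
    simp only [WW]
    rw [map_sum, Finset.sum_mul_sum]
    apply Finset.sum_congr rfl; intro x _
    apply Finset.sum_congr rfl; intro y _
    rw [conj_addChar, ← ψ.map_add_eq_mul, ← ψ.map_add_eq_mul]
    congr 1; ring
  simp_rw [h1]
  rw [Finset.sum_comm]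
  have h2 : ∀ x : F, ∑ a : F, ∑ y : F, ψ (x ^ e - y ^ e) * ψ (a * (x - y)) = Fintype.card F := by
    intro x
    rw [Finset.sum_comm]
    have : ∀ y : F, ∑ a : F, ψ (x ^ e - y ^ e) * ψ (a * (x - y)) =
        if y = x then (Fintype.card F : ℂ) else 0 := by
      intro y
      rw [← Finset.mul_sum, sum_mulShift' ψ hψ]
      by_cases h : y = x
      · simp [h]
      · rw [if_neg h, if_neg (fun h' => h (sub_eq_zero.mp h').symm), mul_zero]
    simp [this]
  simp [h2, sq]

theorem WW_mulChar (ψ : AddChar F ℂ) (e e' : ℕ) (he : e ≠ 0) (he' : e' ≠ 0)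
    (H : ∀ x : F, (x ^ e) ^ e' = x) (χ : MulChar F ℂ) (hχ : χ ≠ 1) :
    ∑ a : F, χ a * WW ψ e a = gaussSum χ ψ * gaussSum (χ⁻¹ ^ e') ψ := by
  simp only [WW, Finset.mul_sum]
  rw [Finset.sum_comm]
  have h1 : ∀ x : F, ∑ a : F, χ a * ψ (x ^ e + a * x) =
      gaussSum χ ψ * ((χ⁻¹ ^ e') (x ^ e) * ψ (x ^ e)) := by
    intro x
    rw [MulChar.pow_apply' _ he', ← map_pow, H x]
    by_cases hx : x = 0
    · subst hx
      have h0 : (χ⁻¹ : MulChar F ℂ) 0 = 0 := MulChar.map_zero _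
      simp [he, MulChar.sum_eq_zero_of_ne_one hχ, h0]
    · have := gaussSum_mulShift_eq χ ψ (Units.mk0 x hx)
      simp only [Units.val_mk0] at this
      have h2 : ∑ a : F, χ a * ψ (x ^ e + a * x) = ψ (x ^ e) * gaussSum χ (ψ.mulShift x) := by
        rw [gaussSum, Finset.mul_sum]
        apply Finset.sum_congr rfl; intro a _
        rw [ψ.map_add_eq_mul, AddChar.mulShift_apply, mul_comm x a]; ring
      rw [h2, this]; ring
  simp_rw [h1]
  rw [← Finset.mul_sum]
  congr 1
  rw [gaussSum]
  exact Fintype.sum_bijective _ (pow_bij e e' H) _ _ (fun x => rfl)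

theorem pow_additive_frob (p : ℕ) [Fact p.Prime] [CharP F p] (e : ℕ) (he : e ≠ 0)
    (hb : Function.Bijective (fun x : F => x ^ e))
    (hadd : ∀ x y : F, (x + y) ^ e = x ^ e + y ^ e) :
    ∃ j : ℕ, ∀ x : F, x ^ e = x ^ (p ^ j) := by
  letI := ZMod.algebra F p
  let g : F →+* F :=
    { toFun := fun x => x ^ e
      map_one' := one_pow e
      map_mul' := fun x y => mul_pow x y e
      map_zero' := zero_pow he
      map_add' := hadd }
  have hg : ∀ r : ZMod p, g (algebraMap (ZMod p) F r) = algebraMap (ZMod p) F r := by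
    intro r
    have : g.comp (algebraMap (ZMod p) F) = algebraMap (ZMod p) F := Subsingleton.elim _ _
    exact congrArg (fun f => f r) this
  let g' : F →ₐ[ZMod p] F := { g with commutes' := hg }
  let G := AlgEquiv.ofBijective g' hb
  obtain ⟨i, hi⟩ := FiniteField.exists_forall_apply_eq_pow (ZMod p) p F G
  refine ⟨i, fun x => ?_⟩
  have := hi x
  rw [Nat.card_zmod] at this
  exact this

theorem exists_neg (p : ℕ) [Fact p.Prime] [CharP F p] (ψ : AddChar F ℂ) (hψ : ψ ≠ 1) (e e' : ℕ)
    (he : e ≠ 0) (H : ∀ x : F, (x ^ e) ^ e' = x)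
    (w : F → ℝ) (hw : ∀ a, WW ψ e a = w a) (hnd : ¬ ∃ j : ℕ, ∀ x : F, x ^ e = x ^ (p ^ j)) :
    ∃ a, w a < 0 := by
  by_contra! hpos
  apply hnd
  have hre : ∀ x : F, ‖ψ x‖ = 1 := fun x => AddChar.norm_apply ψ x
  have hle : ∀ a, w a ≤ Fintype.card F := by
    intro a
    have : ‖WW ψ e a‖ ≤ Fintype.card F := by
      rw [WW]
      refine (norm_sum_le _ _).trans ?_
      simp [hre]
    rw [hw, Complex.norm_real] at this
    exact (le_abs_self _).trans this
  have s1 : ∑ a, w a = Fintype.card F := by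
    have := WW_sum ψ hψ e he
    simp_rw [hw] at this
    exact_mod_cast this
  have s2 : ∑ a, w a * w a = (Fintype.card F : ℝ) ^ 2 := by
    have := WW_sq ψ hψ e
    simp_rw [hw, Complex.conj_ofReal] at this
    exact_mod_cast this
  have s3 : ∑ a, w a * (Fintype.card F - w a) = 0 := by
    simp_rw [mul_sub]
    rw [Finset.sum_sub_distrib, ← Finset.sum_mul, s1, s2]; ring
  have s4 := (Finset.sum_eq_zero_iff_of_nonneg (fun a _ =>
    mul_nonneg (hpos a) (sub_nonneg.mpr (hle a)))).mp s3
  have hex : ∃ a, w a ≠ 0 := by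
    by_contra! h
    simp only [h, Finset.sum_const_zero] at s1
    have := Fintype.card_pos (α := F)
    have h2 : (0:ℝ) < Fintype.card F := by exact_mod_cast this
    linarith
  obtain ⟨a, ha⟩ := hex
  have hwa : w a = Fintype.card F := by
    rcases mul_eq_zero.mp (s4 a (Finset.mem_univ a)) with h | h
    · exact absurd h ha
    · linarith
  have hone : ∀ x : F, ψ (x ^ e + a * x) = 1 := by
    have h1 : ∑ x : F, (1 - (ψ (x ^ e + a * x)).re) = 0 := by
      rw [Finset.sum_sub_distrib, ← Complex.re_sum]
      have := hw a
      rw [WW] at this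
      rw [this, Complex.ofReal_re, hwa]; simp
    have hge : ∀ x : F, 0 ≤ 1 - (ψ (x ^ e + a * x)).re := by
      intro x
      have := (Complex.re_le_norm (ψ (x ^ e + a * x)))
      rw [hre] at this; linarith
    intro x
    have h2 := (Finset.sum_eq_zero_iff_of_nonneg (fun x _ => hge x)).mp h1 x (Finset.mem_univ x)
    have h3 : (ψ (x ^ e + a * x)).re = 1 := by linarith
    have h4 := hre (x ^ e + a * x)
    have h5 := Complex.sq_norm (ψ (x ^ e + a * x))
    rw [h4, Complex.normSq_apply, h3] at h5
    apply Complex.ext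
    · simpa using h3
    · simp; nlinarith
  have hψe : ∀ x : F, ψ (x ^ e) = ψ (-(a * x)) := by
    intro x
    have := hone x
    rw [ψ.map_add_eq_mul] at this
    rw [ψ.map_neg_eq_inv]
    exact eq_inv_of_mul_eq_one_left this
  apply pow_additive_frob p e he (pow_bij e e' H)
  intro x y
  have hz : ∀ z : F, ψ (z * ((x + y) ^ e - x ^ e - y ^ e)) = 1 := by
    intro z
    obtain ⟨s, rfl⟩ := (pow_bij e e' H).2 z
    simp only
    rw [show s ^ e * ((x + y) ^ e - x ^ e - y ^ e) =
      (s * (x + y)) ^ e + (-(s * x) ^ e) + (-(s*y) ^ e) by rw [mul_pow, mul_pow, mul_pow]; ring]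
    rw [ψ.map_add_eq_mul, ψ.map_add_eq_mul, ψ.map_neg_eq_inv, ψ.map_neg_eq_inv, hψe, hψe, hψe,
      ← ψ.map_neg_eq_inv, ← ψ.map_neg_eq_inv, ← ψ.map_add_eq_mul, ← ψ.map_add_eq_mul]
    rw [← ψ.map_zero_eq_one]
    congr 1; ring
  have hsum := sum_mulShift' ψ hψ ((x + y) ^ e - x ^ e - y ^ e)
  simp_rw [hz] at hsum
  by_contra hne
  rw [if_neg (fun h => hne (by linear_combination h))] at hsum
  simp at hsum

theorem niho (p : ℕ) [Fact p.Prime] [CharP F p] (ψ : AddChar F ℂ) (e j : ℕ)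
    (I : Type) [Field I] [Fintype I] (i : I →+* F) (hI : ∀ y : I, y ^ e = y ^ (p ^ j))
    (hcard : Fintype.card F = Fintype.card I ^ 2) (a : F) :
    ∃ w : ℝ, WW ψ e a = w ∧ (w = -(Fintype.card I : ℝ) ∨ 0 ≤ w) := by
  set r := Fintype.card I with hr
  have hr1 : 1 < r := Fintype.one_lt_card
  let φ : F → AddChar I ℂ := fun z =>
    { toFun := fun y => ψ ((i y) ^ (p ^ j) * z ^ e + a * (i y) * z)
      map_zero_eq_one' := by
        have : p ^ j ≠ 0 := pow_ne_zero _ (Fact.out : p.Prime).ne_zero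
        rw [map_zero, zero_pow this]; simp
      map_add_eq_mul' := by
        intro x y
        rw [map_add i, add_pow_char_pow, ← ψ.map_add_eq_mul]
        congr 1; ring }
  have hφ : ∀ z y, φ z y = ψ ((i y) ^ (p ^ j) * z ^ e + a * (i y) * z) := fun _ _ => rfl
  have hφ' : ∀ z y, φ z y = ψ ((i y * z) ^ e + a * (i y * z)) := by
    intro z y
    rw [hφ, mul_pow, ← map_pow i y e, hI y, map_pow, mul_assoc]
  have hsh : ∀ z y0 y, φ (i y0 * z) y = φ z (y * y0) := by
    intro z y0 y
    rw [hφ', hφ', map_mul, mul_assoc]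
  set T := Finset.univ.filter (fun z : F => φ z = 0) with hT
  have main : ((r:ℂ) - 1) * WW ψ e a + (r:ℂ) ^ 2 = r * T.card := by
    have e1 : ∑ z : F, ∑ y : I, φ z y = r * T.card := by
      simp_rw [AddChar.sum_eq_ite]
      rw [← Finset.sum_filter, Finset.sum_const, nsmul_eq_mul, mul_comm]
    rw [← e1, Finset.sum_comm, ← Finset.add_sum_erase _ _ (Finset.mem_univ (0 : I)), add_comm]
    congr 1
    · simp [hcard]
    · have : ∀ y ∈ Finset.univ.erase (0 : I), ∑ z : F, φ z y = WW ψ e a := by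
        intro y hy
        have hy0 : i y ≠ 0 := by
          rw [map_ne_zero]; exact Finset.ne_of_mem_erase hy
        simp_rw [hφ']
        rw [WW]
        exact Fintype.sum_bijective _ (mulLeft_bijective₀ (i y) hy0) _ _ (fun x => rfl)
      rw [Finset.sum_congr rfl this, Finset.sum_const, Finset.card_erase_of_mem (Finset.mem_univ _),
        Finset.card_univ, ← hr, nsmul_eq_mul, Nat.cast_sub hr1.le]
      simp
  have hr2 : (1:ℝ) < r := by exact_mod_cast hr1
  have hrc : (r:ℂ) - 1 ≠ 0 := by
    intro h
    have : (r:ℂ) = (1:ℕ) := by rw [sub_eq_zero.mp h]; simp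
    have := Nat.cast_injective this
    omega
  refine ⟨r * (T.card - r) / (r - 1), ?_, ?_⟩
  · push_cast
    rw [eq_div_iff hrc]
    linear_combination main
  · have h0 : (0 : F) ∈ T := by
      rw [hT, Finset.mem_filter]
      refine ⟨Finset.mem_univ _, ?_⟩
      ext y
      rw [hφ']
      by_cases he : e = 0
      · exfalso
        have h1 := hI 0
        have : p ^ j ≠ 0 := pow_ne_zero _ (Fact.out : p.Prime).ne_zero
        rw [he, pow_zero, zero_pow this] at h1
        exact one_ne_zero h1
      · simp [he]
    by_cases hc : T = {0}
    · left
      rw [hc]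
      rw [div_eq_iff (by linarith)]
      simp; ring
    · right
      obtain ⟨z, hz, hz0⟩ : ∃ z ∈ T, z ≠ 0 := by
        by_contra! h
        exact hc (Finset.eq_singleton_iff_unique_mem.mpr ⟨h0, h⟩)
      have hle : r ≤ T.card := by
        rw [hr, ← Finset.card_univ]
        apply Finset.card_le_card_of_injOn (fun y => i y * z)
        · intro y _
          rw [hT, Finset.mem_filter] at hz
          simp only [hT, Finset.coe_filter, Set.mem_ofPred_eq, Finset.mem_univ, true_and]
          ext y'
          rw [hsh, hz.2]; rfl
        · intro y _ y' _ h
          exact i.injective (mul_right_cancel₀ hz0 h)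
      have : (r:ℝ) ≤ T.card := by exact_mod_cast hle
      apply div_nonneg
      · apply mul_nonneg <;> linarith
      · linarith

theorem WW_inversion (f : F → ℂ) (a : F) (ha : a ≠ 0) [Fintype (MulChar F ℂ)] :
    ∑ χ : MulChar F ℂ, χ a⁻¹ * ∑ b : F, χ b * f b = ((Fintype.card F : ℂ) - 1) * f a := by
  have orth : ∀ c : F, c ≠ 1 → ∑ χ : MulChar F ℂ, χ c = 0 := by
    intro c hc
    obtain ⟨χ0, h0⟩ := MulChar.exists_apply_ne_one_of_hasEnoughRootsOfUnity F ℂ hc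
    have : χ0 c * ∑ χ : MulChar F ℂ, χ c = ∑ χ : MulChar F ℂ, χ c := by
      rw [Finset.mul_sum]
      exact Fintype.sum_bijective _ (Group.mulLeft_bijective χ0) _ _ (fun χ => rfl)
    have h2 : (χ0 c - 1) * ∑ χ : MulChar F ℂ, χ c = 0 := by rw [sub_mul, this, one_mul, sub_self]
    exact (mul_eq_zero.mp h2).resolve_left (sub_ne_zero.mpr h0)
  simp_rw [Finset.mul_sum]
  rw [Finset.sum_comm]
  rw [Finset.sum_eq_single a]
  · have : ∀ χ : MulChar F ℂ, χ a⁻¹ * (χ a * f a) = f a := by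
      intro χ
      rw [← mul_assoc, ← map_mul, inv_mul_cancel₀ ha, map_one, one_mul]
    simp_rw [this]
    rw [Finset.sum_const, Finset.card_univ, nsmul_eq_mul]
    congr 1
    have h := MulChar.card_eq_card_units_of_hasEnoughRootsOfUnity F ℂ
    rw [Nat.card_eq_fintype_card, Nat.card_eq_fintype_card, Fintype.card_units] at h
    rw [h, Nat.cast_sub Fintype.card_pos]
    simp
  · intro b _ hb
    have : ∀ χ : MulChar F ℂ, χ a⁻¹ * (χ b * f b) = χ (a⁻¹ * b) * f b := by
      intro χ
      rw [map_mul]; ring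
    simp_rw [this]
    rw [← Finset.sum_mul, orth, zero_mul]
    intro h
    exact hb ((inv_mul_eq_one₀ ha).mp h).symm
  · simp

end WW

section Core
set_option linter.unusedSectionVars false

theorem isIntegral_addChar {F : Type} [Field F] [Fintype F] (ψ : AddChar F ℂ) (x : F) :
    IsIntegral ℤ (ψ x) := by
  apply IsIntegral.of_pow (Fintype.card_pos (α := F))
  rw [← ψ.map_nsmul_eq_pow, card_nsmul_eq_zero, ψ.map_zero_eq_one]
  exact isIntegral_one

theorem isIntegral_mulChar {F : Type} [Field F] [Fintype F] (χ : MulChar F ℂ) (x : F) :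
    IsIntegral ℤ (χ x) := by
  by_cases hx : x = 0
  · rw [hx, MulChar.map_zero]; exact isIntegral_zero
  · have h1 : 1 < Fintype.card F := Fintype.one_lt_card
    apply IsIntegral.of_pow (n := Fintype.card F - 1) (by omega)
    rw [← map_pow, FiniteField.pow_card_sub_one_eq_one x hx, map_one]
    exact isIntegral_one

theorem isIntegral_WW {F : Type} [Field F] [Fintype F] (ψ : AddChar F ℂ) (e : ℕ) (a : F) :
    IsIntegral ℤ (WW ψ e a) :=
  IsIntegral.sum _ (fun _ _ => isIntegral_addChar _ _)

theorem int_of_isIntegral (A : ℂ) (hA : IsIntegral ℤ A) (m n : ℤ) (hm : m ≠ 0)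
    (h : A * m = n) : ∃ α : ℤ, A = α := by
  have h1 : A = algebraMap ℚ ℂ ((n : ℚ) / m) := by
    have : (m : ℂ) ≠ 0 := by exact_mod_cast hm
    simp
    field_simp
    exact h
  rw [h1] at hA
  have h2 : IsIntegral ℤ ((n : ℚ) / m) :=
    (isIntegral_algebraMap_iff (algebraMap ℚ ℂ).injective).mp hA
  obtain ⟨α, hα⟩ := IsIntegrallyClosed.isIntegral_iff.mp h2
  refine ⟨α, ?_⟩
  rw [h1, ← hα]; simp

/-- The values of the Weil sum are multiples of an integer whose square is divisible by `p * q`. -/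
theorem three_valued (p : ℕ) [Fact p.Prime] (K : Type) [Field K] [Fintype K] [CharP K p]
    (ψ : AddChar K ℂ) (hψ : ψ ≠ 1) (e e' : ℕ) (he : e ≠ 0) (H : ∀ x : K, (x ^ e) ^ e' = x)
    (A : ℂ) (hA : ∀ a : K, a ≠ 0 → WW ψ e a = -A ∨ WW ψ e a = 0 ∨ WW ψ e a = A) :
    ∃ α : ℤ, (∃ s : K → ℤ, ∀ a, WW ψ e a = α * s a) ∧ (p : ℤ) * Fintype.card K ∣ α ^ 2 := by
  have hs : ∀ a : K, ∃ s : ℤ, WW ψ e a = A * s ∧ s ^ 2 ≤ 1 ∧ (a = 0 → s = 0) := by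
    intro a
    by_cases ha : a = 0
    · exact ⟨0, by rw [ha, WW_zero ψ hψ e e' H]; simp, by norm_num, fun _ => rfl⟩
    · rcases hA a ha with h | h | h
      · exact ⟨-1, by rw [h]; simp, by norm_num, fun h => absurd h ha⟩
      · exact ⟨0, by rw [h]; simp, by norm_num, fun h => absurd h ha⟩
      · exact ⟨1, by rw [h]; simp, by norm_num, fun h => absurd h ha⟩
  choose s hs1 hs2 hs3 using hs
  set q := Fintype.card K with hq
  have hqpos : 0 < q := Fintype.card_pos
  have m1 : A * ((∑ a, s a : ℤ) : ℂ) = (q : ℤ) := by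
    have := WW_sum ψ hψ e he
    simp_rw [hs1] at this
    push_cast
    rw [Finset.mul_sum, this]
  have hm0 : (∑ a, s a) ≠ 0 := by
    intro h
    rw [h] at m1
    have hq0 : ((q : ℤ) : ℂ) ^ 1 = 0 := by
      have := m1
      simp at this
      simp [this]
    have hq1 : q = 0 := by simpa using hq0
    have hq2 : 0 < Fintype.card K := Fintype.card_pos
    omega
  have hAint : IsIntegral ℤ A := by
    have : ∃ a, s a ≠ 0 := by
      by_contra! h
      exact hm0 (by simp [h])
    obtain ⟨a, ha⟩ := this
    have h2 : s a = 1 ∨ s a = -1 := by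
      have h3 := hs2 a
      have : s a ≤ 1 := by nlinarith
      have : -1 ≤ s a := by nlinarith
      omega
    have h4 := isIntegral_WW ψ e a
    rw [hs1] at h4
    rcases h2 with h | h
    · rw [h] at h4; simpa using h4
    · rw [h] at h4; simpa using h4.neg
  obtain ⟨α, rfl⟩ := int_of_isIntegral A hAint _ _ hm0 m1
  refine ⟨α, ⟨s, hs1⟩, ?_⟩
  have m2 : α ^ 2 * ∑ a, s a ^ 2 = (q : ℤ) ^ 2 := by
    have := WW_sq ψ hψ e
    simp_rw [hs1] at this
    have h2 : ∀ a, (α * s a : ℂ) * (starRingEnd ℂ) (α * s a : ℂ) = ((α ^ 2 * s a ^ 2 : ℤ) : ℂ) := by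
      intro a
      simp
      ring
    simp_rw [h2] at this
    rw [Finset.mul_sum]
    exact_mod_cast this
  have m3 : ∑ a, s a ^ 2 < (q : ℤ) := by
    have : ∑ a, s a ^ 2 < ∑ a : K, (1 : ℤ) := by
      apply Finset.sum_lt_sum
      · intro a _; exact hs2 a
      · exact ⟨0, Finset.mem_univ _, by rw [hs3 0 rfl]; norm_num⟩
    simpa [hq] using this
  have m1' : α * (∑ a, s a) = q := by exact_mod_cast m1
  obtain ⟨t, -, ht⟩ := FiniteField.card K p
  rw [← hq] at ht
  have hdv : α.natAbs ∣ p ^ (t : ℕ) := by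
    rw [← ht]
    have : α ∣ (q : ℤ) := Dvd.intro _ m1'
    exact Int.natAbs_dvd_natAbs.mpr this |>.trans (by simp)
  obtain ⟨k, -, hk⟩ := (Nat.dvd_prime_pow Fact.out).mp hdv
  have hlt : q < α.natAbs ^ 2 := by
    zify
    rw [sq_abs]
    by_contra! h
    have h0 : 0 ≤ ∑ a, s a ^ 2 := Finset.sum_nonneg (fun a _ => sq_nonneg _)
    have hq0 : (0:ℤ) < q := by exact_mod_cast hqpos
    nlinarith
  rw [hk, ht, ← pow_mul] at hlt
  have := (Nat.pow_lt_pow_iff_right (Fact.out : p.Prime).one_lt).mp hlt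
  have h5 : p * q ∣ α.natAbs ^ 2 := by
    rw [hk, ht, ← pow_mul, ← pow_succ']
    exact pow_dvd_pow _ this
  rw [← Int.natAbs_dvd_natAbs]
  simpa [Int.natAbs_mul, Int.natAbs_pow] using h5

theorem core_s3 (p : ℕ) [Fact p.Prime] (I J K : Type) [Field I] [Fintype I] [Field J] [Fintype J]
    [Field K] [Fintype K] [Algebra J K] [CharP J p] [CharP K p] (i : I →+* J)
    (ψ : AddChar J ℂ) (hψ : ψ ≠ 1) (ψK : AddChar K ℂ)
    (hψK : ∀ x, ψK x = ψ (Algebra.trace J K x)) (e e' : ℕ) (he : e ≠ 0) (he' : e' ≠ 0)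
    (H : ∀ x : K, (x ^ e) ^ e' = x) (j : ℕ) (hI : ∀ y : I, y ^ e = y ^ (p ^ j))
    (hcard : Fintype.card J = Fintype.card I ^ 2)
    (hnd : ¬ ∃ j : ℕ, ∀ x : J, x ^ e = x ^ (p ^ j))
    (A : ℂ) (hA : ∀ a : K, a ≠ 0 → WW ψK e a = -A ∨ WW ψK e a = 0 ∨ WW ψK e a = A) : False := by
  have HJ : ∀ x : J, (x ^ e) ^ e' = x := by
    intro x
    apply (algebraMap J K).injective
    rw [map_pow, map_pow, H]
  have hψK1 : ψK ≠ 1 := by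
    obtain ⟨b, hb⟩ := AddChar.ne_one_iff.mp hψ
    obtain ⟨x, rfl⟩ := Algebra.trace_surjective J K b
    exact AddChar.ne_one_iff.mpr ⟨x, by rwa [hψK]⟩
  obtain ⟨α, ⟨s, hs⟩, hα⟩ := three_valued p K ψK hψK1 e e' he H A hA
  choose w hw hw' using niho p ψ e j I i hI hcard
  obtain ⟨a, ha⟩ := exists_neg p ψ hψ e e' he HJ w hw hnd
  set r := Fintype.card I with hr
  have hr1 : 1 < r := Fintype.one_lt_card
  have hWa : WW ψ e a = -(r : ℂ) := by
    rcases hw' a with h | h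
    · rw [hw, h]; simp
    · linarith
  have ha0 : a ≠ 0 := by
    rintro rfl
    rw [WW_zero ψ hψ e e' HJ] at hWa
    have : (r : ℂ) = 0 := by linear_combination hWa
    have : r = 0 := by exact_mod_cast this
    omega
  obtain ⟨n, hn⟩ : ∃ n, Module.finrank J K = n + 1 :=
    Nat.exists_eq_succ_of_ne_zero Module.finrank_pos.ne'
  have hq : Fintype.card K = r ^ (2 * (n+1)) := by
    rw [Module.card_eq_pow_finrank (K := J) (V := K), hcard, hn, ← pow_mul]
  have hpr : p ∣ r := by
    obtain ⟨t, -, ht⟩ := FiniteField.card J p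
    rw [hcard] at ht
    have h : p ∣ r ^ 2 := ht ▸ dvd_pow_self p t.ne_zero
    exact (Fact.out : p.Prime).dvd_of_dvd_pow h
  have hp0 : (p : ℂ) ≠ 0 := by exact_mod_cast (Fact.out : p.Prime).ne_zero
  have hr0 : (r : ℂ) ≠ 0 := by
    have : r ≠ 0 := by omega
    exact_mod_cast this
  -- key claim
  have key : ∀ χ : MulChar J ℂ, ∃ m : ℕ, 0 < m ∧
      IsIntegral ℤ (((∑ b : J, χ b * WW ψ e b) / r) ^ m / p) := by
    intro χ
    by_cases hχ : χ = 1
    · refine ⟨1, one_pos, ?_⟩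
      have : ∑ b : J, χ b * WW ψ e b = (r : ℂ) ^ 2 := by
        have h1 := WW_sum ψ hψ e he
        rw [hcard] at h1
        push_cast at h1
        rw [← h1]
        apply Finset.sum_congr rfl
        intro b _
        by_cases hb : b = 0
        · rw [hb, WW_zero ψ hψ e e' HJ, mul_zero]
        · rw [hχ, MulChar.one_apply (Ne.isUnit hb), one_mul]
      obtain ⟨c, hc⟩ := hpr
      have h2 : ((∑ b : J, χ b * WW ψ e b) / r) ^ 1 / p = (c : ℂ) := by
        rw [this]
        have : (r : ℂ) = p * c := by exact_mod_cast hc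
        rw [pow_one, sq, mul_div_assoc, div_self hr0, mul_one, this]
        field_simp
      rw [h2]
      exact_mod_cast (isIntegral_algebraMap (R := ℤ) (A := ℂ) (x := (c : ℤ)))
    · refine ⟨2 * (n+1), by omega, ?_⟩
      -- the lifted character
      let lift : MulChar J ℂ → MulChar K ℂ := fun χ =>
        { toFun := fun x => χ (Algebra.norm J x)
          map_one' := by simp
          map_mul' := by simp
          map_nonunit' := by
            intro x hx
            have hx0 : x = 0 := by
              by_contra h
              exact hx (Ne.isUnit h)
            rw [hx0]
            show χ (Algebra.norm J (0:K)) = 0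
            rw [Algebra.norm_zero]
            exact MulChar.map_zero _ }
      have hlift : ∀ χ x, lift χ x = χ (Algebra.norm J x) := fun _ _ => rfl
      have hgs : ∀ χ, gaussSum (lift χ) ψK = (-1) ^ n * gaussSum χ ψ ^ (n+1) := by
        intro χ
        rw [← davenport_hasse K χ ψ hψ n hn, gaussSum]
        simp_rw [hlift, hψK]
      have hl1 : lift χ ≠ 1 := by
        intro h
        apply hχ
        ext b
        obtain ⟨x, hx⟩ := FiniteField.norm_surjective J K (b : J)
        have hx0 : x ≠ 0 := by
          rintro rfl
          rw [Algebra.norm_zero] at hx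
          exact b.ne_zero hx.symm
        rw [← hx, ← hlift, h, hx, MulChar.one_apply (Ne.isUnit hx0), MulChar.one_apply b.isUnit]
      have hl2 : (lift χ)⁻¹ ^ e' = lift (χ⁻¹ ^ e') := by
        ext x
        rw [hlift, MulChar.pow_apply' _ he', MulChar.pow_apply' _ he', MulChar.inv_apply_eq_inv',
          MulChar.inv_apply_eq_inv', hlift]
      have h1 := WW_mulChar ψ e e' he he' HJ χ hχ
      have h2 := WW_mulChar ψK e e' he he' H (lift χ) hl1
      rw [hl2, hgs, hgs] at h2
      have h3 : ∑ b : K, lift χ b * WW ψK e b = (∑ b : J, χ b * WW ψ e b) ^ (n+1) := by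
        rw [h2, h1, mul_pow]
        have : ((-1:ℂ) ^ n) * (-1) ^ n = 1 := by rw [← mul_pow]; simp
        linear_combination (gaussSum χ ψ ^ (n+1) * gaussSum (χ⁻¹ ^ e') ψ ^ (n+1)) * this
      have h4 : ∑ b : K, lift χ b * WW ψK e b = α * ∑ b : K, lift χ b * s b := by
        rw [Finset.mul_sum]
        apply Finset.sum_congr rfl
        intro b _
        rw [hs]; ring
      obtain ⟨c, hc⟩ := hα
      have h5 : ((∑ b : J, χ b * WW ψ e b) / r) ^ (2 * (n+1)) / p =
          c * (∑ b : K, lift χ b * s b) ^ 2 := by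
        rw [div_pow, mul_comm 2 (n+1), pow_mul, ← h3, h4, mul_pow]
        have hc' : (α : ℂ) ^ 2 = p * r ^ (2 * (n+1)) * c := by
          rw [hq] at hc
          exact_mod_cast hc
        rw [hc', mul_comm (n+1) 2]
        field_simp
      rw [h5]
      have hint : ∀ z : ℤ, IsIntegral ℤ (z : ℂ) := fun z =>
        isIntegral_algebraMap (R := ℤ) (A := ℂ) (x := z)
      exact (hint c).mul (IsIntegral.pow (IsIntegral.sum _ (fun b _ =>
        (isIntegral_mulChar _ b).mul (hint _))) 2)
  -- work in the ring of algebraic integers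
  have hRint : ∀ z : ℤ, IsIntegral ℤ (z : ℂ) := fun z =>
    isIntegral_algebraMap (R := ℤ) (A := ℂ) (x := z)
  let R := integralClosure ℤ ℂ
  let P : Ideal R := (Ideal.span {(p : R)}).radical
  have hrad : ∀ z : ℂ, ∀ m : ℕ, 0 < m → IsIntegral ℤ (z ^ m / p) →
      ∃ hz : IsIntegral ℤ z, (⟨z, hz⟩ : R) ∈ P := by
    intro z m hm hz
    have h1 : IsIntegral ℤ (z ^ m) := by
      have : z ^ m = z ^ m / p * ((p : ℤ) : ℂ) := by push_cast; field_simp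
      rw [this]
      exact hz.mul (hRint _)
    refine ⟨IsIntegral.of_pow hm h1, m, ?_⟩
    rw [Ideal.mem_span_singleton]
    refine ⟨⟨_, hz⟩, ?_⟩
    apply Subtype.ext
    simp only [MulMemClass.coe_mul, SubmonoidClass.coe_pow]
    push_cast
    field_simp
  have key2 : ∀ χ : MulChar J ℂ, ∃ hz : IsIntegral ℤ ((∑ b : J, χ b * WW ψ e b) / r),
      (⟨_, hz⟩ : R) ∈ P := by
    intro χ
    obtain ⟨m, hm, h⟩ := key χ
    exact hrad _ m hm h
  choose hz hz' using key2
  letI : Fintype (MulChar J ℂ) := Fintype.ofFinite _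
  have inv := WW_inversion (WW ψ e) a ha0
  have h1 : (1 : R) ∈ P := by
    have e1 : (1 : R) = (r : R) ^ 2 + ∑ χ : MulChar J ℂ,
        (⟨χ a⁻¹, isIntegral_mulChar χ _⟩ : R) * ⟨_, hz χ⟩ := by
      apply Subtype.ext
      push_cast
      have : ∀ χ : MulChar J ℂ, χ a⁻¹ * ((∑ b : J, χ b * WW ψ e b) / r) =
          (χ a⁻¹ * ∑ b : J, χ b * WW ψ e b) / r := fun χ => by ring
      simp_rw [this]
      rw [← Finset.sum_div, inv, hWa, hcard]
      push_cast
      field_simp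
      ring
    rw [e1]
    apply P.add_mem
    · apply Ideal.pow_mem_of_mem _ _ _ two_pos
      apply Ideal.le_radical
      rw [Ideal.mem_span_singleton]
      exact_mod_cast (Nat.cast_dvd_cast hpr : (p : R) ∣ (r : R))
    · exact P.sum_mem (fun χ _ => P.mul_mem_left _ (hz' χ))
  obtain ⟨m, hm⟩ := h1
  rw [one_pow, Ideal.mem_span_singleton] at hm
  obtain ⟨⟨c, hc⟩, hc'⟩ := hm
  have hc2 : (1 : ℂ) = p * c := by
    have := congrArg Subtype.val hc'
    simpa using this
  obtain ⟨z, rfl⟩ := int_of_isIntegral c hc p 1 (by exact_mod_cast (Fact.out : p.Prime).ne_zero)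
    (by push_cast; rw [hc2]; ring)
  have hc3 : (1 : ℤ) = p * z := by exact_mod_cast hc2
  have : (p : ℤ) ∣ 1 := Dvd.intro _ hc3.symm
  have := Int.natCast_dvd_natCast.mp (by exact_mod_cast this : (p : ℤ) ∣ ((1 : ℕ) : ℤ))
  exact (Fact.out : p.Prime).one_lt.ne' (Nat.dvd_one.mp this)

end Core
theorem zpow_eq_of_modEq {F : Type} [Field F] [Fintype F] (d : ℤ) (hd0 : d ≠ 0) (e : ℕ)
    (he : e ≠ 0) (h : d ≡ (e : ℤ) [ZMOD (Fintype.card F : ℤ) - 1]) (x : F) : x ^ d = x ^ e := by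
  by_cases hx : x = 0
  · rw [hx, zero_pow he, zero_zpow _ hd0]
  · obtain ⟨k, hk⟩ := h.dvd
    have h1 : (1:ℕ) < Fintype.card F := Fintype.one_lt_card
    have h2 : x ^ ((Fintype.card F : ℤ) - 1) = 1 := by
      have := FiniteField.pow_card_sub_one_eq_one x hx
      rw [← zpow_natCast, Nat.cast_sub h1.le] at this
      simpa using this
    have h3 : (e : ℤ) = d + ((Fintype.card F : ℤ) - 1) * k := by linarith
    rw [← zpow_natCast, h3, zpow_add₀ hx, zpow_mul, h2, one_zpow, mul_one]

theorem modEq_of_pow_eq {F : Type} [Field F] [Fintype F] (m n : ℕ)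
    (h : ∀ x : F, x ^ m = x ^ n) : (m : ℤ) ≡ (n : ℤ) [ZMOD (Fintype.card F : ℤ) - 1] := by
  obtain ⟨g, hg⟩ := IsCyclic.exists_generator (α := Fˣ)
  have h1 : orderOf g = Fintype.card F - 1 := by
    rw [orderOf_eq_card_of_forall_mem_zpowers hg, Nat.card_eq_fintype_card, Fintype.card_units]
  have h2 : g ^ m = g ^ n := by
    ext
    simpa using h g
  have h3 := pow_eq_pow_iff_modEq.mp h2
  rw [h1] at h3
  have h4 := Int.natCast_modEq_iff.mpr h3
  have h5 : (1:ℕ) < Fintype.card F := Fintype.one_lt_card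
  rwa [Nat.cast_sub h5.le, Nat.cast_one] at h4

theorem card_sub_one_dvd {K : Type} [Field K] [Fintype K] (J : Subfield K) :
    ((Nat.card J : ℤ) - 1) ∣ (Fintype.card K : ℤ) - 1 := by
  have h : Nat.card K = Nat.card J ^ Module.finrank J K :=
    Module.natCard_eq_pow_finrank (K := J) (V := K)
  rw [← Nat.card_eq_fintype_card, h]
  push_cast
  exact sub_one_dvd_pow_sub_one _ _

theorem stmt3 (p : ℕ) [Fact p.Prime] (K : Type) [Field K] [Fintype K] [CharP K p]
    [Algebra (ZMod p) K]
    (d : ℤ) (hd : Int.gcd d ((Fintype.card K : ℤ) - 1) = 1)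
    (I J : Subfield K) (hIJ : I ≤ J)
    (hJI : Nat.card J = Nat.card I ^ 2)
    (hdegI : IsDegenerate p (Nat.card I) d)
    (hndJ : ¬ IsDegenerate p (Nat.card J) d) :
    ¬ ∃ A : ℂ, weilValues p K d = {-A, 0, A} := by
  rintro ⟨A, hA⟩
  have hcI : 1 < Nat.card I := by
    rw [Nat.card_eq_fintype_card]; exact Fintype.one_lt_card
  have hcJK : Nat.card J ≤ Fintype.card K := by
    rw [← Nat.card_eq_fintype_card]
    exact Nat.card_le_card_of_injective (Subtype.val : J → K) Subtype.val_injective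
  have hq4 : 4 ≤ Fintype.card K := by nlinarith
  have hd0 : d ≠ 0 := by
    rintro rfl
    rw [Int.gcd_zero_left] at hd
    omega
  set q := Fintype.card K with hq
  obtain ⟨e, he0, hde⟩ : ∃ e : ℕ, e ≠ 0 ∧ d ≡ (e : ℤ) [ZMOD (q : ℤ) - 1] := by
    refine ⟨(d % ((q:ℤ) - 1)).toNat + (q - 1), by omega, ?_⟩
    have h0 : 0 ≤ d % ((q:ℤ) - 1) := Int.emod_nonneg _ (by omega)
    push_cast
    rw [Int.toNat_of_nonneg h0, Nat.cast_sub (by omega), Nat.cast_one]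
    unfold Int.ModEq
    simp
  have hcop : Nat.Coprime e (q - 1) := by
    have h1 : Int.gcd (e : ℤ) ((q : ℤ) - 1) = 1 := by
      rw [← hd]
      obtain ⟨k, hk⟩ := hde.dvd
      have h3 : (e : ℤ) = d + ((q : ℤ) - 1) * k := by linarith
      rw [h3]
      simp
    have h3 : ((q : ℤ) - 1) = ((q - 1 : ℕ) : ℤ) := by
      rw [Nat.cast_sub (by omega), Nat.cast_one]
    rw [h3, Int.gcd_natCast_natCast] at h1
    exact h1
  obtain ⟨e', he'0, H⟩ : ∃ e' : ℕ, e' ≠ 0 ∧ ∀ x : K, (x ^ e) ^ e' = x := by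
    obtain ⟨m, hm⟩ := Nat.exists_mul_mod_eq_one_of_coprime hcop (by omega)
    have hm' : e * m ≡ 1 [MOD (q - 1)] := by
      unfold Nat.ModEq
      rw [hm.2, Nat.mod_eq_of_lt (by omega)]
    have hm0 : m ≠ 0 := by
      rintro rfl
      simp at hm
    refine ⟨m, hm0, fun x => ?_⟩
    rw [← pow_mul]
    have h4 := Int.natCast_modEq_iff.mpr hm'
    rw [Nat.cast_sub (by omega), Nat.cast_one] at h4
    have h5 := zpow_eq_of_modEq (F := K) ((1:ℕ):ℤ) (by simp) (e * m) (Nat.mul_ne_zero he0 hm0)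
      h4.symm x
    rw [← h5]
    simp
  haveI : CharP J p := RingHom.charP J.subtype J.subtype_injective p
  letI : Algebra (ZMod p) J := ZMod.algebra J p
  haveI := IsScalarTower.of_algebraMap_eq' (R := ZMod p) (S := J) (A := K)
    (Subsingleton.elim _ _)
  let ψJ : AddChar J ℂ := (ZMod.stdAddChar : AddChar (ZMod p) ℂ).compAddMonoidHom
    (Algebra.trace (ZMod p) J).toAddMonoidHom
  let ψK : AddChar K ℂ := (ZMod.stdAddChar : AddChar (ZMod p) ℂ).compAddMonoidHom
    (Algebra.trace (ZMod p) K).toAddMonoidHom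
  have hψJ : ψJ ≠ 1 := by
    intro h
    obtain ⟨x, hx⟩ := Algebra.trace_surjective (ZMod p) J 1
    have h1 : ψJ x = 1 := by rw [h]; rfl
    have h2 : (ZMod.stdAddChar (1 : ZMod p) : ℂ) = 1 := by
      rw [← hx]; exact h1
    rw [← AddChar.map_zero_eq_one (ZMod.stdAddChar : AddChar (ZMod p) ℂ)] at h2
    exact one_ne_zero (ZMod.injective_stdAddChar h2)
  have hψK : ∀ x, ψK x = ψJ (Algebra.trace J K x) := by
    intro x
    show (ZMod.stdAddChar _ : ℂ) = ZMod.stdAddChar _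
    congr 1
    exact (Algebra.trace_trace (R := ZMod p) (S := J) x).symm
  have hcan : ∀ x, canonicalAddChar p K x = ψK x := by
    intro x
    show _ = (ZMod.stdAddChar (Algebra.trace (ZMod p) K x) : ℂ)
    unfold canonicalAddChar
    have h1 := ZMod.stdAddChar_coe (N := p) ((Algebra.trace (ZMod p) K x).val : ℤ)
    rw [Int.cast_natCast, ZMod.natCast_zmod_val] at h1
    rw [h1]
    simp
  have hW : ∀ a, weilSum p K d a = WW ψK e a := by
    intro a
    unfold weilSum WW
    refine Finset.sum_congr rfl fun x _ => ?_
    rw [hcan, zpow_eq_of_modEq d hd0 e he0 hde x]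
  obtain ⟨j, hj⟩ := hdegI
  have hp0 : p ≠ 0 := (Fact.out : p.Prime).ne_zero
  refine core_s3 p I J K (Subfield.inclusion hIJ) ψJ hψJ ψK hψK e e' he0 he'0 H j ?_ ?_ ?_ A ?_
  · intro y
    have h1 := (hde.of_dvd (card_sub_one_dvd I)).symm.trans hj
    rw [Nat.card_eq_fintype_card] at h1
    have h2 := zpow_eq_of_modEq (F := I) (e : ℤ) (by exact_mod_cast he0) (p ^ j)
      (pow_ne_zero _ hp0) (by exact_mod_cast h1) y
    rw [← h2, zpow_natCast]
  · rw [← Nat.card_eq_fintype_card, ← Nat.card_eq_fintype_card]; exact hJI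
  · rintro ⟨k, hk⟩
    apply hndJ
    refine ⟨k, ?_⟩
    have h1 := hde.of_dvd (card_sub_one_dvd J)
    have h2 := modEq_of_pow_eq e (p ^ k) hk
    rw [← Nat.card_eq_fintype_card] at h2
    push_cast at h2
    exact h1.trans h2
  · intro a ha
    have h1 : weilSum p K d a ∈ weilValues p K d := ⟨a, ha, rfl⟩
    rw [hA, hW] at h1
    simpa using h1
end
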